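/- arXiv:0710.2898 — 2 statements merged into one kernel-verified Lean document; each statement's English description precedes it below -/
import Mathlib

section
/- Let A ∈ M_n be a complex n×n matrix and let 1 ≤ r < k ≤ n. Let 𝒮 be any subset of F_r containing the set 𝒮₀ = {2e^{iξ}‖A‖P : P ∈ P_r, ξ ∈ [0,2π)}. Then Λ_k(A) = ⋂{Λ_{k−r}(A + F) : F ∈ 𝒮}. -/
noncomputable section

open scoped InnerProductSpace
open Complex

variable {H : Type*} [NormedAddCommGroup H] [InnerProductSpace ℂ H] [CompleteSpace H]

/-- `P` is an orthogonal projection: self-adjoint and idempotent. -/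
def IsOrthProj (P : H →L[ℂ] H) : Prop :=
  IsSelfAdjoint P ∧ P ∘L P = P

/-- The rank of a bounded operator, as a cardinal. -/
def opRank (F : H →L[ℂ] H) : Cardinal :=
  Module.rank ℂ (LinearMap.range (F : H →ₗ[ℂ] H))

/-- The rank-`k` numerical range `Λ_k(A)`. -/
def rankKRange (k : ℕ) (A : H →L[ℂ] H) : Set ℂ :=
  { lam | ∃ P : H →L[ℂ] H, IsOrthProj P ∧ opRank P = k ∧ P ∘L A ∘L P = lam • P }

/-- The classical numerical range `W(A)`. -/
def numRange (A : H →L[ℂ] H) : Set ℂ :=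
  { z | ∃ x : H, ‖x‖ = 1 ∧ ⟪x, A x⟫_ℂ = z }

/-- `λ_k(T)`: the supremum over `k`-dimensional compressions of the `k`-th largest
eigenvalue of the compression (Courant–Fischer form: sup over `k`-dimensional
subspaces of the infimum of the Rayleigh quotient). -/
def lambdaSA (k : ℕ) (T : H →L[ℂ] H) : ℝ :=
  sSup { t : ℝ | ∃ V : Submodule ℂ H, Module.finrank ℂ V = k ∧
    ∀ x ∈ V, ‖x‖ = 1 → t ≤ (⟪x, T x⟫_ℂ).re }

/-- The real part `(T + T*)/2` of an operator. -/
def reOp (T : H →L[ℂ] H) : H →L[ℂ] H :=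
  (2 : ℂ)⁻¹ • (T + ContinuousLinearMap.adjoint T)

/-- The set `Ω_k(A)`. -/
def omegaK (k : ℕ) (A : H →L[ℂ] H) : Set ℂ :=
  { μ | ∀ ξ ∈ Set.Ico (0 : ℝ) (2 * Real.pi),
      (Complex.exp (ξ * Complex.I) * μ).re ≤ lambdaSA k (reOp (Complex.exp (ξ * Complex.I) • A)) }

/-!
A number `λ` lies in `Λ_k(A)` exactly when the form `⟪x, (A - λ) x⟫` vanishes on some
`k`-dimensional subspace. A perturbation of rank `r` vanishes on a subspace of codimension `r`,
which gives one inclusion.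

For the other one, fix `z` and diagonalize the Hermitian part of `z (A - λ)`. If it has fewer than
`k` nonnegative eigenvalues, then one is negative, which forces all of them below `2 ‖z‖ ‖A‖`.
Subtracting `2 ‖z‖ ‖A‖ P`, with `P` the projection onto the span of `r` well-chosen eigenvectors,
then leaves fewer than `k - r` nonnegative eigenvalues. Hence `λ ∉ Λ_{k-r}(A + 2 e^{iξ} ‖A‖ P)`
when `z e^{iξ} = -‖z‖`.

So if `λ` lies in the intersection, `Re z ⟪x, (A - λ) x⟫` is nonnegative on a `k`-dimensional
subspace for every `z`, and it remains to prove the theorem of Li and Sze that the form then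
vanishes on a `k`-dimensional subspace. Eigenvectors of the pencil of the form and its conjugate
transpose split off one at a time: an isotropic one lowers `k` by one, and if no eigenvector is
isotropic, then the form is diagonal in some basis. For a diagonal form whose values have both
signs, the slopes of the positive and of the negative values interlace by the sign counts, and a
theorem of Fan and Pall realizes one real diagonal matrix as a compression of the other.
-/

open scoped ComplexConjugate

section Dimension

theorem finrank_le_finrank_inf_ker_add_one {K V : Type*} [Field K] [AddCommGroup V] [Module K V]
    (W : Submodule K V) [FiniteDimensional K W] (l : Module.Dual K V) :
    Module.finrank K W ≤ Module.finrank K (W ⊓ LinearMap.ker l : Submodule K V) + 1 := by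
  have hrank := LinearMap.finrank_range_add_finrank_ker (l ∘ₗ W.subtype)
  have hrange := Submodule.finrank_le (LinearMap.range (l ∘ₗ W.subtype))
  rw [Module.finrank_self] at hrange
  rw [LinearMap.ker_comp, ← Submodule.finrank_map_subtype_eq, Submodule.map_comap_subtype] at hrank
  omega

theorem exists_submodule_finrank_eq {K V : Type*} [Field K] [AddCommGroup V] [Module K V]
    {k : ℕ} (hk : k ≤ Module.finrank K V) : ∃ W : Submodule K V, Module.finrank K W = k := by
  obtain ⟨s, hcard, hs⟩ := exists_finset_linearIndependent_of_le_finrank hk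
  exact ⟨Submodule.span K s, by rw [finrank_span_finset_eq_card hs, hcard]⟩

end Dimension

section Pencil

theorem exists_smul_add_smul_eq_zero {K V W : Type*} [Field K] [IsAlgClosed K] [AddCommGroup V]
    [Module K V] [FiniteDimensional K V] [Nontrivial V] [AddCommGroup W] [Module K W]
    [FiniteDimensional K W] (hVW : Module.finrank K V = Module.finrank K W) (M N : V →ₗ[K] W) :
    ∃ v : V, v ≠ 0 ∧ ∃ p q : K, (p ≠ 0 ∨ q ≠ 0) ∧ p • M v + q • N v = 0 := by
  by_cases hM : Function.Injective M
  · let e := M.linearEquivOfInjective hM hVW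
    obtain ⟨c, hc⟩ := Module.End.exists_eigenvalue (e.symm.toLinearMap ∘ₗ N)
    obtain ⟨v, hv⟩ := hc.exists_hasEigenvector
    have hNv : N v = c • M v := by
      simpa [e] using congrArg e hv.apply_eq_smul
    exact ⟨v, hv.2, c, -1, by simp, by simp [hNv]⟩
  · rw [← LinearMap.ker_eq_bot] at hM
    obtain ⟨v, hv, hv0⟩ := Submodule.exists_mem_ne_zero_of_ne_bot hM
    exact ⟨v, hv0, 1, 0, by simp, by simpa using hv⟩

theorem ae_mul_add_conj_mul_ne_zero {p q : ℂ} (h : p ≠ 0 ∨ q ≠ 0) :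
    ∀ᵐ z : ℂ, z * p + conj z * q ≠ 0 := by
  let L : ℂ →ₗ[ℝ] ℂ := LinearMap.mulRight ℝ p + LinearMap.mulRight ℝ q ∘ₗ conjLIE.toLinearMap
  have hL (z : ℂ) : L z = z * p + conj z * q := rfl
  have hne : LinearMap.ker L ≠ ⊤ := by
    intro htop
    rw [LinearMap.ker_eq_top] at htop
    have h1 : p + q = 0 := by simpa [htop] using (hL 1).symm
    have hI : I * p + -I * q = 0 := by simpa [htop] using (hL I).symm
    have hsub : p - q = 0 :=
      (mul_eq_zero.mp (by linear_combination hI : I * (p - q) = 0)).resolve_left I_ne_zero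
    have hp : p = 0 := by linear_combination (h1 + hsub) / 2
    have hq : q = 0 := by linear_combination (h1 - hsub) / 2
    tauto
  exact MeasureTheory.measure_mono_null (fun z hz => not_not.mp hz)
    (MeasureTheory.Measure.addHaar_submodule MeasureTheory.volume _ hne)

end Pencil

section SesquilinearForm

variable {V : Type*} [AddCommGroup V] [Module ℂ V] {φ : V →ₗ⋆[ℂ] V →ₗ[ℂ] ℂ} {v : V}

/-- The conjugate transpose `φ*` of a sesquilinear form, `φ* x y = conj (φ y x)`. -/
def conjTransposeForm (φ : V →ₗ⋆[ℂ] V →ₗ[ℂ] ℂ) : V →ₗ⋆[ℂ] V →ₗ[ℂ] ℂ :=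
  LinearMap.mk₂'ₛₗ (starRingEnd ℂ) (RingHom.id ℂ) (fun x y => conj (φ y x))
    (by simp) (by simp) (by simp) (by simp)

@[simp]
theorem conjTransposeForm_apply (φ : V →ₗ⋆[ℂ] V →ₗ[ℂ] ℂ) (x y : V) :
    conjTransposeForm φ x y = conj (φ y x) :=
  rfl

/-- `v` is an eigenvector of the pencil spanned by a form `φ` and its conjugate transpose `φ*`:
some nontrivial combination of `φ v` and `φ* v` vanishes. -/
def IsPencilEigenvector (φ : V →ₗ⋆[ℂ] V →ₗ[ℂ] ℂ) (v : V) : Prop :=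
  v ≠ 0 ∧ ∃ p q : ℂ, (p ≠ 0 ∨ q ≠ 0) ∧ p • φ v + q • conjTransposeForm φ v = 0

theorem exists_isPencilEigenvector [FiniteDimensional ℂ V] [Nontrivial V]
    (φ : V →ₗ⋆[ℂ] V →ₗ[ℂ] ℂ) : ∃ v, IsPencilEigenvector φ v := by
  let b := Module.finBasis ℂ V
  obtain ⟨v, hv, p, q, hpq, h⟩ := exists_smul_add_smul_eq_zero (by simp)
    (LinearMap.pi fun i => conjTransposeForm φ (b i)) (LinearMap.pi fun i => φ (b i))
  refine ⟨v, hv, conj p, conj q, by simpa using hpq, b.ext fun i => ?_⟩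
  simpa using congrArg conj (congrFun h i)

theorem IsPencilEigenvector.exists_smul_eq (h : IsPencilEigenvector φ v) :
    ∃ (l : Module.Dual ℂ V) (γ δ : ℂ), (γ ≠ 0 ∨ δ ≠ 0) ∧
      φ v = γ • l ∧ conjTransposeForm φ v = δ • l := by
  obtain ⟨-, p, q, hpq, h⟩ := h
  obtain rfl | hp := eq_or_ne p 0
  · have hq : q ≠ 0 := by simpa using hpq
    exact ⟨φ v, 1, 0, by simp, by simp, by simpa [hq] using h⟩
  · refine ⟨conjTransposeForm φ v, -q / p, 1, by simp, ?_, by simp⟩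
    rw [← smul_right_inj hp, smul_smul, mul_div_cancel₀ _ hp, neg_smul]
    exact eq_neg_of_add_eq_zero_left h

end SesquilinearForm

section NonnegSubspaces

variable {V : Type*} [AddCommGroup V] [Module ℂ V] {φ : V →ₗ⋆[ℂ] V →ₗ[ℂ] ℂ} {v : V} {k : ℕ}

/-- For almost every `z : ℂ`, the form `Re (z φ)` is nonnegative on a subspace of dimension at
least `k`. Quantifying over almost every `z`, rather than over every `z`, leaves the freedom of
discarding the finitely many lines on which a reduction step degenerates. -/
def HasNonnegSubspaces (φ : V →ₗ⋆[ℂ] V →ₗ[ℂ] ℂ) (k : ℕ) : Prop :=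
  ∀ᵐ z : ℂ, ∃ W : Submodule ℂ V, k ≤ Module.finrank ℂ W ∧ ∀ x ∈ W, 0 ≤ (z * φ x x).re

theorem HasNonnegSubspaces.domRestrict {U : Submodule ℂ V}
    (h : ∀ᵐ z : ℂ, ∃ W ≤ U, k ≤ Module.finrank ℂ W ∧ ∀ x ∈ W, 0 ≤ (z * φ x x).re) :
    HasNonnegSubspaces (φ.domRestrict₁₂ U U) k := by
  filter_upwards [h] with z ⟨W, hWU, hk, hW⟩
  exact ⟨W.comap U.subtype, by rwa [(Submodule.comapSubtypeEquivOfLe hWU).finrank_eq],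
    fun x hx => hW x hx⟩

/-- Cauchy–Schwarz for the Hermitian part of `φ`. -/
theorem apply_add_conj_apply_eq_zero (hφ : ∀ x, 0 ≤ (φ x x).re) (hv : (φ v v).re = 0) (x : V) :
    φ v x + conj (φ x v) = 0 := by
  let core : PreInnerProductSpace.Core ℂ V :=
    { inner := fun x y => φ x y + conj (φ y x)
      conj_inner_symm := fun x y => by simp [add_comm]
      re_inner_nonneg := fun x => by simpa using hφ x
      add_left := fun x y z => by simp [add_add_add_comm]
      smul_left := fun x y r => by simp [mul_add] }
  have hle : ‖φ v x + conj (φ x v)‖ * ‖φ x v + conj (φ v x)‖ ≤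
      (φ v v + conj (φ v v)).re * (φ x x + conj (φ x x)).re :=
    InnerProductSpace.Core.inner_mul_inner_self_le (c := core) v x
  have hsymm : φ x v + conj (φ v x) = conj (φ v x + conj (φ x v)) := by simp [add_comm]
  rw [hsymm, RCLike.norm_conj, ← sq, add_re, conj_re, hv, add_zero, zero_mul] at hle
  exact norm_eq_zero.mp (pow_eq_zero_iff two_ne_zero |>.mp (le_antisymm hle (sq_nonneg _)))

theorem mul_apply_add_conj_mul_conj_apply_eq_zero {W : Submodule ℂ V} {z : ℂ} {x : V}
    (hW : ∀ y ∈ W, 0 ≤ (z * φ y y).re) (hvW : v ∈ W) (hv : φ v v = 0) (hx : x ∈ W) :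
    z * φ v x + conj z * conj (φ x v) = 0 := by
  have h := apply_add_conj_apply_eq_zero (φ := (z • φ).domRestrict₁₂ W W) (v := ⟨v, hvW⟩)
    (fun y => hW y y.2) (by simp [LinearMap.domRestrict₁₂_apply, hv]) ⟨x, hx⟩
  simpa [LinearMap.domRestrict₁₂_apply] using h

theorem apply_add_smul_self {y : V} (hv : φ v v = 0) (hvy : φ v y = 0) (hyv : φ y v = 0) (c : ℂ) :
    φ (y + c • v) (y + c • v) = φ y y := by
  simp [hv, hvy, hyv]

theorem exists_nonneg_submodule_le_inf_ker [FiniteDimensional ℂ V] {W : Submodule ℂ V} {z : ℂ}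
    {l m : Module.Dual ℂ V} (hv : φ v v = 0) (hlv : l v = 0)
    (horth : ∀ x, l x = 0 → φ v x = 0 ∧ φ x v = 0)
    (hvW : v ∈ W → W ≤ LinearMap.ker l)
    (hk : k + 1 ≤ Module.finrank ℂ W) (hW : ∀ x ∈ W, 0 ≤ (z * φ x x).re) :
    ∃ W' ≤ LinearMap.ker l ⊓ LinearMap.ker m,
      k ≤ Module.finrank ℂ W' ∧ ∀ x ∈ W', 0 ≤ (z * φ x x).re := by
  set W₁ : Submodule ℂ V := W ⊓ LinearMap.ker l ⊔ Submodule.span ℂ {v}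
  have hW₁l : W₁ ≤ LinearMap.ker l :=
    sup_le inf_le_right ((Submodule.span_singleton_le_iff_mem _ _).mpr hlv)
  have hdim : k + 1 ≤ Module.finrank ℂ W₁ := by
    by_cases hmem : v ∈ W
    · have hWW₁ : W ≤ W₁ := (le_inf le_rfl (hvW hmem)).trans le_sup_left
      exact hk.trans (Submodule.finrank_mono hWW₁)
    · rw [Submodule.finrank_sup_span_singleton fun h => hmem (Submodule.mem_inf.mp h).1]
      exact hk.trans (finrank_le_finrank_inf_ker_add_one W l)
  refine ⟨W₁ ⊓ LinearMap.ker m, inf_le_inf_right _ hW₁l, ?_, ?_⟩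
  · have := finrank_le_finrank_inf_ker_add_one W₁ m
    omega
  · rintro x ⟨hx, -⟩
    obtain ⟨y, hy, u, hu, rfl⟩ := Submodule.mem_sup.mp hx
    obtain ⟨c, rfl⟩ := Submodule.mem_span_singleton.mp hu
    rw [apply_add_smul_self hv (horth y hy.2).1 (horth y hy.2).2]
    exact hW y hy.1

/-- For almost every `z`, the vector `v` lies in the radical of `Re (z φ)` on every subspace that
contains `v` and on which this form is nonnegative. -/
theorem HasNonnegSubspaces.exists_domRestrict_of_isotropic [FiniteDimensional ℂ V]
    (hφ : HasNonnegSubspaces φ (k + 1)) (hv : IsPencilEigenvector φ v) (hv0 : φ v v = 0) :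
    ∃ U : Submodule ℂ V, v ∉ U ∧ (∀ x ∈ U, φ v x = 0 ∧ φ x v = 0) ∧
      HasNonnegSubspaces (φ.domRestrict₁₂ U U) k := by
  obtain ⟨l, γ, δ, hγδ, hγ, hδ⟩ := hv.exists_smul_eq
  have hφv (x : V) : φ v x = γ * l x := by simp [hγ]
  have hφv' (x : V) : conj (φ x v) = δ * l x := by simpa using congrArg (· x) hδ
  obtain ⟨m, hm⟩ : ∃ m : Module.Dual ℂ V, m v ≠ 0 := by
    simpa using (Module.forall_dual_apply_eq_zero_iff ℂ v).not.mpr hv.1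
  have hlv : l v = 0 := by
    have h₁ := hφv v
    have h₂ := hφv' v
    grind
  have horth (x : V) (hx : l x = 0) : φ v x = 0 ∧ φ x v = 0 :=
    ⟨by simp [hφv, hx], by simpa [hx] using hφv' x⟩
  refine ⟨LinearMap.ker l ⊓ LinearMap.ker m, fun h => hm h.2, fun x hx => horth x hx.1,
    .domRestrict ?_⟩
  filter_upwards [hφ, ae_mul_add_conj_mul_ne_zero hγδ] with z ⟨W, hk, hW⟩ hz
  refine exists_nonneg_submodule_le_inf_ker hv0 hlv horth (fun hvW x hx => ?_) hk hW
  have h := mul_apply_add_conj_mul_conj_apply_eq_zero hW hvW hv0 hx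
  rw [hφv, hφv', ← mul_assoc, ← mul_assoc, ← add_mul] at h
  exact (mul_eq_zero.mp h).resolve_left hz

theorem exists_isotropic_of_domRestrict [FiniteDimensional ℂ V] {U : Submodule ℂ V}
    (hv : φ v v = 0) (hvU : v ∉ U) (horth : ∀ x ∈ U, φ v x = 0 ∧ φ x v = 0)
    {T : Submodule ℂ U} (hk : k ≤ Module.finrank ℂ T)
    (hT : ∀ x ∈ T, φ.domRestrict₁₂ U U x x = 0) :
    ∃ W : Submodule ℂ V, k + 1 ≤ Module.finrank ℂ W ∧ ∀ x ∈ W, φ x x = 0 := by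
  have hTU : T.map U.subtype ≤ U := Submodule.map_subtype_le U T
  refine ⟨T.map U.subtype ⊔ Submodule.span ℂ {v}, ?_, fun x hx => ?_⟩
  · rw [Submodule.finrank_sup_span_singleton fun h => hvU (hTU h), Submodule.finrank_map_subtype_eq]
    omega
  · obtain ⟨y, hy, u, hu, rfl⟩ := Submodule.mem_sup.mp hx
    obtain ⟨c, rfl⟩ := Submodule.mem_span_singleton.mp hu
    rw [apply_add_smul_self hv (horth y (hTU hy)).1 (horth y (hTU hy)).2]
    obtain ⟨t, ht, rfl⟩ := hy
    exact hT t ht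

end NonnegSubspaces

section Diagonalization

variable {V : Type*} [AddCommGroup V] [Module ℂ V] {φ : V →ₗ⋆[ℂ] V →ₗ[ℂ] ℂ} {v : V}

theorem IsPencilEigenvector.exists_orthogonal_complement (hv : IsPencilEigenvector φ v)
    (hv0 : φ v v ≠ 0) :
    ∃ U : Submodule ℂ V, (∀ x ∈ U, φ v x = 0 ∧ φ x v = 0) ∧ ∀ x, ∃ c : ℂ, x + c • v ∈ U := by
  obtain ⟨l, γ, δ, -, hγ, hδ⟩ := hv.exists_smul_eq
  have hφv (x : V) : φ v x = γ * l x := by simp [hγ]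
  have hφv' (x : V) : conj (φ x v) = δ * l x := by simpa using congrArg (· x) hδ
  have hlv : l v ≠ 0 := fun h => hv0 (by rw [hφv, h, mul_zero])
  refine ⟨LinearMap.ker l, fun x (hx : l x = 0) => ⟨by simp [hφv, hx], by simpa [hx] using hφv' x⟩,
    fun x => ⟨-(l x / l v), ?_⟩⟩
  simp [hlv]

theorem IsPencilEigenvector.of_domRestrict {U : Submodule ℂ V} {u : U}
    (hu : IsPencilEigenvector (φ.domRestrict₁₂ U U) u) (horth : ∀ x ∈ U, φ v x = 0 ∧ φ x v = 0)
    (hcompl : ∀ x, ∃ c : ℂ, x + c • v ∈ U) : IsPencilEigenvector φ (u : V) := by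
  obtain ⟨hu0, p, q, hpq, h⟩ := hu
  refine ⟨by simpa using hu0, p, q, hpq, LinearMap.ext fun x => ?_⟩
  obtain ⟨c, hc⟩ := hcompl x
  obtain ⟨hvu, huv⟩ := horth u u.2
  have := congrArg (· ⟨x + c • v, hc⟩) h
  simpa [LinearMap.domRestrict₁₂_apply, hvu, huv] using this

theorem exists_basis_isOrthoᵢ [FiniteDimensional ℂ V]
    (hφ : ∀ v, IsPencilEigenvector φ v → φ v v ≠ 0) :
    ∃ (n : ℕ) (b : Module.Basis (Fin n) ℂ V), φ.IsOrthoᵢ b ∧ ∀ i, φ (b i) (b i) ≠ 0 := by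
  induction hd : Module.finrank ℂ V using Nat.strong_induction_on generalizing V with
  | _ d ih =>
  obtain hV | hV := subsingleton_or_nontrivial V
  · exact ⟨0, Module.Basis.empty V, fun i => i.elim0, fun i => i.elim0⟩
  obtain ⟨v, hv⟩ := exists_isPencilEigenvector φ
  have hv0 := hφ v hv
  obtain ⟨U, horth, hcompl⟩ := hv.exists_orthogonal_complement hv0
  have hvU : v ∉ U := fun h => hv0 (horth v h).1
  obtain ⟨n, b, hb, hb0⟩ := ih _ (hd ▸ Submodule.finrank_lt fun h => hvU (h ▸ trivial))
    (φ := φ.domRestrict₁₂ U U) (fun u hu => hφ u (hu.of_domRestrict horth hcompl)) rfl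
  have hli (c : ℂ) (x : V) (hx : x ∈ U) (h : c • v + x = 0) : c = 0 := by
    have := congrArg (φ v) h
    simpa [(horth x hx).1, hv0] using this
  refine ⟨n + 1, b.mkFinCons v hli hcompl, ?_, ?_⟩
  · rw [LinearMap.isOrthoᵢ_def, Module.Basis.coe_mkFinCons]
    refine Fin.cases (Fin.cases (by simp) fun j _ => ?_) fun i => Fin.cases (fun _ => ?_) ?_
    · simpa using (horth _ (b j).2).1
    · simpa using (horth _ (b i).2).2
    · intro j hij
      simpa [LinearMap.domRestrict₁₂_apply] using
        LinearMap.isOrthoᵢ_def.mp hb i j (by simpa using hij)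
  · rw [Module.Basis.coe_mkFinCons]
    exact Fin.cases (by simpa using hv0) fun i => by
      simpa [LinearMap.domRestrict₁₂_apply] using hb0 i

end Diagonalization

section Inertia

variable {ι V : Type*} [Fintype ι] [AddCommGroup V] [Module ℂ V]

theorem apply_self_eq_sum_of_isOrthoᵢ {φ : V →ₗ⋆[ℂ] V →ₗ[ℂ] ℂ} (b : Module.Basis ι ℂ V)
    (hb : φ.IsOrthoᵢ b) (x : V) :
    φ x x = ∑ i, ((‖b.repr x i‖ ^ 2 : ℝ) : ℂ) * φ (b i) (b i) := by
  classical
  have hdiag (i : ι) : φ (b i) x = b.repr x i * φ (b i) (b i) := by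
    conv_lhs => rw [← b.sum_repr x]
    rw [map_sum, Finset.sum_eq_single_of_mem i (Finset.mem_univ i)
      fun j _ hji => by simp [hb hji.symm]]
    simp
  conv_lhs => enter [1, 2]; rw [← b.sum_repr x]
  rw [map_sum, LinearMap.sum_apply]
  refine Finset.sum_congr rfl fun i _ => ?_
  rw [LinearMap.map_smulₛₗ, LinearMap.smul_apply, hdiag, smul_eq_mul, ← mul_assoc,
    RCLike.conj_mul]
  simp

theorem finrank_le_card_of_sum_nonneg (b : Module.Basis ι ℂ V) (d : ι → ℝ) (W : Submodule ℂ V)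
    (hW : ∀ x ∈ W, 0 ≤ ∑ i, d i * ‖b.repr x i‖ ^ 2) :
    Module.finrank ℂ W ≤ Fintype.card {i // 0 ≤ d i} := by
  let f : W →ₗ[ℂ] ({i // 0 ≤ d i} → ℂ) :=
    LinearMap.funLeft ℂ ℂ Subtype.val ∘ₗ b.equivFun.toLinearMap ∘ₗ W.subtype
  have hf : Function.Injective f := by
    refine (injective_iff_map_eq_zero f).mpr fun x hx => Subtype.ext (b.ext_elem fun i => ?_)
    have hnonneg (i : ι) (hi : 0 ≤ d i) : b.repr (x : V) i = 0 := congrFun hx ⟨i, hi⟩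
    have hterm (i : ι) : d i * ‖b.repr (x : V) i‖ ^ 2 ≤ 0 := by
      obtain hi | hi := le_total 0 (d i)
      · simp [hnonneg i hi]
      · exact mul_nonpos_of_nonpos_of_nonneg hi (sq_nonneg _)
    have hsum := le_antisymm (Finset.sum_nonpos fun i _ => hterm i) (hW x x.2)
    have hzero := (Finset.sum_eq_zero_iff_of_nonpos fun i _ => hterm i).mp hsum i
      (Finset.mem_univ i)
    obtain hi | hi := le_or_gt 0 (d i)
    · simpa using hnonneg i hi
    · simpa [hi.ne] using hzero
  simpa using LinearMap.finrank_le_finrank_of_injective hf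

theorem exists_submodule_sum_nonneg (b : Module.Basis ι ℂ V) (d : ι → ℝ) :
    ∃ W : Submodule ℂ V, Module.finrank ℂ W = Fintype.card {i // 0 ≤ d i} ∧
      ∀ x ∈ W, 0 ≤ ∑ i, d i * ‖b.repr x i‖ ^ 2 := by
  refine ⟨Submodule.span ℂ (Set.range fun i : {i // 0 ≤ d i} => b i),
    finrank_span_eq_card (b.linearIndependent.comp _ Subtype.val_injective), fun x hx => ?_⟩
  refine Finset.sum_nonneg fun i _ => ?_
  obtain hi | hi := le_or_gt 0 (d i)
  · positivity
  · have hrange : (Set.range fun i : {i // 0 ≤ d i} => b i) = b '' {i | 0 ≤ d i} := by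
      rw [Set.image_eq_range]; rfl
    rw [hrange, b.mem_span_image] at hx
    have : b.repr x i = 0 := by
      by_contra h
      exact hi.not_ge (hx (Finsupp.mem_support_iff.mpr h))
    simp [this]

theorem HasNonnegSubspaces.le_card_pos {φ : V →ₗ⋆[ℂ] V →ₗ[ℂ] ℂ} {k : ℕ}
    (hφ : HasNonnegSubspaces φ k) (b : Module.Basis ι ℂ V) (hb : φ.IsOrthoᵢ b) {z : ℂ}
    (hz : ∀ i, (z * φ (b i) (b i)).re ≠ 0) :
    k ≤ Fintype.card {i // 0 < (z * φ (b i) (b i)).re} := by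
  let w (i : ι) : ℂ := φ (b i) (b i)
  have hopen : IsOpen {z' : ℂ | ∀ i, 0 < (z * w i).re * (z' * w i).re} := by
    simp only [Set.ofPred_forall]
    exact isOpen_iInter_of_finite fun i => isOpen_lt (by fun_prop) (by fun_prop)
  obtain ⟨z', hsign, W, hk, hW⟩ := (MeasureTheory.Measure.dense_of_ae hφ).inter_open_nonempty _
    hopen ⟨z, fun i => mul_self_pos.mpr (hz i)⟩
  have hinertia := finrank_le_card_of_sum_nonneg b (fun i => (z' * w i).re) W fun x hx => by
    convert hW x hx using 1
    rw [apply_self_eq_sum_of_isOrthoᵢ b hb, Finset.mul_sum, Complex.re_sum]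
    refine Finset.sum_congr rfl fun i _ => ?_
    rw [mul_left_comm, Complex.re_ofReal_mul, mul_comm]
  refine hk.trans (hinertia.trans (Fintype.card_subtype_mono _ _ fun i hi => ?_))
  exact pos_of_mul_pos_left (hsign i) hi

end Inertia

section DiagonalCompression

open scoped Matrix

theorem isCompact_setOf_transpose_mul_self_eq_one {m n : Type*} [Fintype m]
    [DecidableEq n] :
    IsCompact {Q : Matrix m n ℝ | Qᵀ * Q = 1} := by
  refine IsCompact.of_isClosed_subset (isCompact_univ_pi fun _ => isCompact_univ_pi fun _ =>
    isCompact_Icc (a := (-1 : ℝ)) (b := 1)) (isClosed_eq (by fun_prop) (by fun_prop)) ?_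
  intro Q hQ i _ j _
  have hcol : ∑ i, Q i j * Q i j = 1 := by
    simpa [Matrix.mul_apply] using congrFun₂ (hQ : Qᵀ * Q = 1) j j
  have hentry : Q i j * Q i j ≤ 1 := hcol ▸ Finset.single_le_sum (f := fun i => Q i j * Q i j)
    (fun i _ => mul_self_nonneg _) (Finset.mem_univ i)
  exact abs_le.mp (abs_le_one_iff_mul_self_le_one.mpr hentry)

variable {l m n : Type*} [Fintype l] [Fintype m] [DecidableEq l] [DecidableEq m] [DecidableEq n]

/-- The diagonal matrix `diag ν` is a compression of `diag τ`: it is `Qᵀ diag τ Q` for a real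
matrix `Q` with orthonormal columns. -/
def IsDiagonalCompression (τ : m → ℝ) (ν : n → ℝ) : Prop :=
  ∃ Q : Matrix m n ℝ, Qᵀ * Q = 1 ∧ Qᵀ * Matrix.diagonal τ * Q = Matrix.diagonal ν

theorem IsDiagonalCompression.refl (τ : m → ℝ) : IsDiagonalCompression τ τ :=
  ⟨1, by simp, by simp⟩

theorem IsDiagonalCompression.trans {τ : l → ℝ} {ν : m → ℝ} {μ : n → ℝ}
    (hτν : IsDiagonalCompression τ ν) (hνμ : IsDiagonalCompression ν μ) :
    IsDiagonalCompression τ μ := by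
  obtain ⟨P, hP, hPτ⟩ := hτν
  obtain ⟨Q, hQ, hQν⟩ := hνμ
  refine ⟨P * Q, ?_, ?_⟩
  · rw [Matrix.transpose_mul, Matrix.mul_assoc, ← Matrix.mul_assoc Pᵀ, hP, Matrix.one_mul, hQ]
  · rw [Matrix.transpose_mul, ← hQν, ← hPτ]
    simp only [Matrix.mul_assoc]

theorem isClosed_setOf_isDiagonalCompression :
    IsClosed {p : (m → ℝ) × (n → ℝ) | IsDiagonalCompression p.1 p.2} := by
  have : CompactSpace {Q : Matrix m n ℝ | Qᵀ * Q = 1} :=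
    isCompact_iff_compactSpace.mp isCompact_setOf_transpose_mul_self_eq_one
  have hclosed : IsClosed {q : {Q : Matrix m n ℝ | Qᵀ * Q = 1} × (m → ℝ) × (n → ℝ) |
      q.1.1ᵀ * Matrix.diagonal q.2.1 * q.1.1 = Matrix.diagonal q.2.2} :=
    isClosed_eq (by fun_prop) (by fun_prop)
  convert isClosedMap_snd_of_compactSpace _ hclosed
  ext p
  simp [IsDiagonalCompression]

theorem isDiagonalCompression_of_orthogonal_columns {τ : m → ℝ} {ν N : n → ℝ}
    (R : Matrix m n ℝ) (hN : ∀ i, 0 < N i) (hR : Rᵀ * R = Matrix.diagonal N)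
    (hτ : Rᵀ * Matrix.diagonal τ * R = Matrix.diagonal (N * ν)) : IsDiagonalCompression τ ν := by
  let Q : Matrix m n ℝ := .of fun l i => R l i / √(N i)
  have hQ {M : Matrix m m ℝ} {ρ : n → ℝ} (hM : Rᵀ * M * R = Matrix.diagonal (N * ρ)) :
      Qᵀ * M * Q = Matrix.diagonal ρ := by
    ext i j
    have hscale : (Qᵀ * M * Q) i j = (Rᵀ * M * R) i j / (√(N i) * √(N j)) := by
      simp only [Q, Matrix.mul_apply, Matrix.transpose_apply, Matrix.of_apply, Finset.sum_mul,
        Finset.sum_div]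
      exact Finset.sum_congr rfl fun _ _ => Finset.sum_congr rfl fun _ _ => by ring
    rw [hscale, hM]
    obtain rfl | hij := eq_or_ne i j
    · simp [Real.mul_self_sqrt (hN i).le, (hN i).ne']
    · simp [hij]
  exact ⟨Q, by simpa using hQ (M := 1) (ρ := 1) (by simpa using hR), hQ hτ⟩

/-- The compressing columns are `√(c l) / (ν i - τ l)`: by the secular equations they are
orthogonal, being eigenvectors of a compression of `diag τ` to a hyperplane. -/
theorem isDiagonalCompression_of_secular [Nonempty m] {τ c : m → ℝ} {ν : n → ℝ}
    (hc : ∀ l, 0 < c l) (hν : Function.Injective ν) (hne : ∀ i l, ν i ≠ τ l)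
    (hsec : ∀ i, ∑ l, c l / (ν i - τ l) = 0) : IsDiagonalCompression τ ν := by
  have hsub (i : n) (l : m) : ν i - τ l ≠ 0 := sub_ne_zero.mpr (hne i l)
  let R : Matrix m n ℝ := .of fun l i => √(c l) / (ν i - τ l)
  have hprod (l : m) (i j : n) : R l i * R l j = c l / ((ν i - τ l) * (ν j - τ l)) := by
    simp only [R, Matrix.of_apply]
    rw [div_mul_div_comm, Real.mul_self_sqrt (hc l).le]
  have hτ (i j : n) : ∑ l, τ l * (R l i * R l j) = ν j * ∑ l, R l i * R l j := by
    rw [Finset.mul_sum, ← sub_eq_zero, ← neg_eq_zero, neg_sub, ← Finset.sum_sub_distrib, ← hsec i]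
    refine Finset.sum_congr rfl fun l _ => ?_
    rw [hprod]
    field_simp [hsub i l, hsub j l]
  have horth (i j : n) (hij : i ≠ j) : ∑ l, R l i * R l j = 0 := by
    have h := hτ j i
    simp only [mul_comm (R _ j), hτ i j] at h
    have hmul : (ν j - ν i) * ∑ l, R l i * R l j = 0 := by linear_combination h
    exact (mul_eq_zero.mp hmul).resolve_left (sub_ne_zero.mpr (hν.ne hij.symm))
  refine isDiagonalCompression_of_orthogonal_columns (N := fun i => ∑ l, R l i * R l i) R
    (fun i => Finset.sum_pos (fun l _ => ?_) Finset.univ_nonempty) ?_ ?_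
  · rw [hprod]
    exact div_pos (hc l) (mul_self_pos.mpr (hsub i l))
  · ext i j
    obtain rfl | hij := eq_or_ne i j
    · simp [Matrix.mul_apply]
    · simp [Matrix.mul_apply, horth i j hij, hij]
  · ext i j
    have hentry : (Rᵀ * Matrix.diagonal τ * R) i j = ∑ l, τ l * (R l i * R l j) := by
      rw [Matrix.mul_apply]
      refine Finset.sum_congr rfl fun l _ => ?_
      rw [Matrix.mul_diagonal, Matrix.transpose_apply]
      ring
    obtain rfl | hij := eq_or_ne i j
    · simp [hentry, hτ, mul_comm]
    · simp [hentry, hτ, horth i j hij, hij]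

end DiagonalCompression

section FanPall

variable {p : ℕ}

/-- The residues at the points `τ l` of the rational function `∏ j, (x - ν j) / ∏ l, (x - τ l)`. -/
def interlacingWeight (τ : Fin (p + 1) → ℝ) (ν : Fin p → ℝ) (l : Fin (p + 1)) : ℝ :=
  ∏ j, (τ l - ν j) / (τ l - τ (l.succAbove j))

theorem sum_interlacingWeight_div_sub_eq_zero {τ : Fin (p + 1) → ℝ} {ν : Fin p → ℝ}
    (hτ : Function.Injective τ) {i : Fin p} (hne : ∀ l, ν i ≠ τ l) :
    ∑ l, interlacingWeight τ ν l / (ν i - τ l) = 0 := by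
  have hdeg : (Lagrange.nodal Finset.univ ν).degree <
      (Finset.univ : Finset (Fin (p + 1))).card := by
    rw [Lagrange.degree_nodal]
    simpa using mod_cast Nat.lt_succ_self p
  have heval := congrArg (Polynomial.eval (ν i)) (Lagrange.eq_interpolate hτ.injOn hdeg)
  rw [Lagrange.eval_nodal_at_node (Finset.mem_univ i),
    Lagrange.eval_interpolate_not_at_node _ (fun l _ => hne l)] at heval
  rw [← (mul_eq_zero.mp heval.symm).resolve_left
    (Lagrange.eval_nodal_not_at_node fun l _ => hne l)]
  refine Finset.sum_congr rfl fun l _ => ?_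
  have herase : (Finset.univ.erase l : Finset (Fin (p + 1))) =
      Finset.univ.map (Fin.succAboveEmb l) := by
    ext j
    simp [Fin.exists_succAbove_eq_iff]
  rw [interlacingWeight, Lagrange.eval_nodal, Finset.prod_div_distrib, Lagrange.nodalWeight,
    Finset.prod_inv_distrib, herase, Finset.prod_map]
  simp only [Fin.succAboveEmb_apply]
  ring

theorem isDiagonalCompression_of_strict_interlacing {τ : Fin (p + 1) → ℝ} {ν : Fin p → ℝ}
    (hleft : ∀ i, τ i.castSucc < ν i) (hright : ∀ i, ν i < τ i.succ) :
    IsDiagonalCompression τ ν := by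
  have hτ : StrictMono τ := Fin.strictMono_iff_lt_succ.mpr fun i => (hleft i).trans (hright i)
  have hlow (l : Fin (p + 1)) (i : Fin p) (h : l ≤ i.castSucc) : τ l < ν i :=
    (hτ.monotone h).trans_lt (hleft i)
  have hhigh (l : Fin (p + 1)) (i : Fin p) (h : i.castSucc < l) : ν i < τ l :=
    (hright i).trans_le (hτ.monotone (Fin.castSucc_lt_iff_succ_le.mp h))
  have hν : StrictMono ν := fun i j hij => (hright i).trans (hlow _ j (by simpa using hij))
  have hne (i : Fin p) (l : Fin (p + 1)) : ν i ≠ τ l :=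
    (le_or_gt l i.castSucc).elim (fun h => (hlow l i h).ne') fun h => (hhigh l i h).ne
  refine isDiagonalCompression_of_secular (c := interlacingWeight τ ν)
    (fun l => Finset.prod_pos fun j _ => ?_) hν.injective hne
    fun i => sum_interlacingWeight_div_sub_eq_zero hτ.injective (hne i)
  obtain h | h := le_or_gt l j.castSucc
  · rw [Fin.succAbove_of_le_castSucc _ _ h]
    exact div_pos_of_neg_of_neg (sub_neg.mpr (hlow l j h))
      (sub_neg.mpr ((hlow l j h).trans (hright j)))
  · rw [Fin.succAbove_of_castSucc_lt _ _ h]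
    exact div_pos (sub_pos.mpr (hhigh l j h)) (sub_pos.mpr (hτ h))

theorem isDiagonalCompression_of_interlacing {τ : Fin (p + 1) → ℝ} {ν : Fin p → ℝ}
    (hleft : ∀ i, τ i.castSucc ≤ ν i) (hright : ∀ i, ν i ≤ τ i.succ) :
    IsDiagonalCompression τ ν := by
  let τ' (ε : ℝ) (l : Fin (p + 1)) : ℝ := τ l + 2 * (l : ℕ) * ε
  let ν' (ε : ℝ) (i : Fin p) : ℝ := ν i + (2 * (i : ℕ) + 1) * ε
  have hstrict (ε : ℝ) (hε : 0 < ε) : IsDiagonalCompression (τ' ε) (ν' ε) := by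
    refine isDiagonalCompression_of_strict_interlacing (fun i => ?_) fun i => ?_
    · simp only [τ', ν', Fin.val_castSucc]
      linarith [hleft i]
    · simp only [τ', ν', Fin.val_succ, Nat.cast_succ]
      linarith [hright i]
  have hcont : Continuous fun ε => (τ' ε, ν' ε) := by fun_prop
  have hlim : Filter.Tendsto (fun ε => (τ' ε, ν' ε)) (nhdsWithin 0 (Set.Ioi 0)) (nhds (τ, ν)) :=
    (hcont.tendsto' 0 (τ, ν) (by simp [τ', ν'])).mono_left nhdsWithin_le_nhds
  have hmem : (τ, ν) ∈ {q : (Fin (p + 1) → ℝ) × (Fin p → ℝ) | IsDiagonalCompression q.1 q.2} :=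
    isClosed_setOf_isDiagonalCompression.mem_of_tendsto hlim
      (eventually_nhdsWithin_of_forall hstrict)
  exact hmem

theorem exists_monotone_interlacing {α : Type*} [LinearOrder α] {k d : ℕ} {μ : Fin k → α}
    {τ : Fin (k + d + 1) → α} (hμ : Monotone μ) (hτ : Monotone τ)
    (hleft : ∀ i, τ (i.castAdd d).castSucc ≤ μ i) (hright : ∀ i, μ i ≤ τ (i.addNat d).succ) :
    ∃ ν : Fin (k + d) → α, Monotone ν ∧ (∀ i, τ i.castSucc ≤ ν i) ∧ (∀ i, ν i ≤ τ i.succ) ∧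
      (∀ i, ν (i.castAdd d) ≤ μ i) ∧ ∀ i, μ i ≤ ν (i.addNat d) := by
  let ν (i : Fin (k + d)) : α :=
    if h : d ≤ i then max (τ i.castSucc) (μ (i.subNat d h)) else τ i.castSucc
  have hτν (i : Fin (k + d)) : τ i.castSucc ≤ ν i := by
    grind
  refine ⟨ν, fun i j hij => ?_, hτν, fun i => ?_, fun i => ?_, fun i => ?_⟩
  · have hτij : τ i.castSucc ≤ τ j.castSucc := hτ (by simpa using hij)
    have hij' : (i : ℕ) ≤ j := hij
    simp only [ν]
    split_ifs with hi hj
    · exact max_le_max hτij (hμ (by simpa [Fin.le_def] using Nat.sub_le_sub_right hij' d))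
    · exact absurd (hi.trans hij') hj
    · exact le_max_of_le_left hτij
    · exact hτij
  · have hsucc : τ i.castSucc ≤ τ i.succ := hτ i.castSucc_lt_succ.le
    simp only [ν]
    split_ifs with h
    · have := hright (i.subNat d h)
      exact max_le hsucc (by simpa using this)
    · exact hsucc
  · simp only [ν]
    split_ifs with h
    · exact max_le (hleft i) (hμ (by simp [Fin.le_def]))
    · exact hleft i
  · simp [ν]

/-- Fan and Pall's interlacing theorem for compressions of codimension `d`. -/
theorem isDiagonalCompression_of_generalized_interlacing {k d : ℕ} {μ : Fin k → ℝ}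
    {τ : Fin (k + d) → ℝ} (hμ : Monotone μ) (hτ : Monotone τ)
    (hleft : ∀ i, τ (i.castAdd d) ≤ μ i) (hright : ∀ i, μ i ≤ τ (i.addNat d)) :
    IsDiagonalCompression τ μ := by
  induction d with
  | zero =>
    obtain rfl : τ = μ := funext fun i => le_antisymm (hleft i) (hright i)
    exact .refl τ
  | succ d ih =>
    obtain ⟨ν, hν, hleft', hright', hνμ, hμν⟩ := exists_monotone_interlacing hμ hτ hleft hright
    exact (isDiagonalCompression_of_interlacing hleft' hright').trans (ih hν hνμ hμν)

end FanPall

section Slopes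

open scoped Finset

theorem exists_equiv_fin_monotone {κ α : Type*} [Fintype κ] [LinearOrder α] (t : κ → α) {n : ℕ}
    (hn : Fintype.card κ = n) : ∃ e : Fin n ≃ κ, Monotone (t ∘ e) :=
  let e := (Fintype.equivFinOfCardEq hn).symm
  ⟨(Tuple.sort (t ∘ e)).trans e, Tuple.monotone_sort (t ∘ e)⟩

theorem apply_le_of_card_lt_le {α : Type*} [LinearOrder α] [DenselyOrdered α] {m n e : ℕ}
    {σ : Fin m → α} {ρ : Fin n → α} (hσ : Monotone σ) (hρ : Monotone ρ)
    (hcard : ∀ s, (∀ i, σ i ≠ s) → (∀ j, ρ j ≠ s) → #{j | ρ j < s} ≤ #{i | σ i < s} + e)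
    {i : Fin m} {j : Fin n} (hij : (i : ℕ) + e ≤ j) : σ i ≤ ρ j := by
  by_contra! hlt
  obtain ⟨s, ⟨hjs, hsi⟩, hs⟩ := ((Set.Ioo_infinite hlt).sdiff
    ((Set.finite_range σ).union (Set.finite_range ρ))).nonempty
  have hσcard : #{i | σ i < s} ≤ i := by
    rw [← Fin.card_Iio]
    refine Finset.card_le_card fun l hl => Finset.mem_Iio.mpr ?_
    exact hσ.reflect_lt ((Finset.mem_filter_univ l).mp hl |>.trans hsi)
  have hρcard : j + 1 ≤ #{j | ρ j < s} := by
    rw [← Fin.card_Iic]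
    refine Finset.card_le_card fun l hl => (Finset.mem_filter_univ l).mpr ?_
    exact (hρ (Finset.mem_Iic.mp hl)).trans_lt hjs
  have := hcard s (fun l hl => hs (.inl ⟨l, hl⟩)) (fun l hl => hs (.inr ⟨l, hl⟩))
  omega

theorem card_subtype_sum {α β : Type*} [Fintype α] [Fintype β] (P : α ⊕ β → Prop)
    [DecidablePred P] :
    Fintype.card {x // P x} = #{a | P (.inl a)} + #{b | P (.inr b)} := by
  simp only [Fintype.card_subtype, Finset.card_filter, Fintype.sum_sum_type]

theorem card_lt_add_card_gt {κ α : Type*} [Fintype κ] [LinearOrder α] {ρ : κ → α} {s : α}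
    (hs : ∀ j, ρ j ≠ s) : #{j | ρ j < s} + #{j | s < ρ j} = Fintype.card κ := by
  have hgt (j : κ) : s < ρ j ↔ ¬ρ j < s := by rw [not_lt, (hs j).symm.le_iff_lt]
  simp only [hgt, Finset.card_filter_add_card_filter_not, Finset.card_univ]

theorem re_add_I_mul (s : ℝ) {w : ℂ} (hw : w.re ≠ 0) :
    ((s + I) * w).re = w.re * (s - w.im / w.re) := by
  simp
  field_simp

/-- For a slope `s`, counting the positive values in the directions `s + I` and `-(s + I)` gives the
two halves of the interlacing condition at `s`. -/
theorem isDiagonalCompression_slopes {k d : ℕ} {w : Fin (k + d) ⊕ Fin k → ℂ}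
    (hpos : ∀ l, 0 < (w (.inl l)).re) (hneg : ∀ j, (w (.inr j)).re < 0)
    (hτ : Monotone fun l => (w (.inl l)).im / (w (.inl l)).re)
    (hμ : Monotone fun j => (w (.inr j)).im / (w (.inr j)).re)
    (hcount : ∀ z : ℂ, (∀ i, (z * w i).re ≠ 0) → k ≤ Fintype.card {i // 0 < (z * w i).re}) :
    IsDiagonalCompression (fun l => (w (.inl l)).im / (w (.inl l)).re)
      fun j => (w (.inr j)).im / (w (.inr j)).re := by
  set τ := fun l => (w (.inl l)).im / (w (.inl l)).re
  set μ := fun j => (w (.inr j)).im / (w (.inr j)).re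
  have hinl (s : ℝ) (l) : ((s + I) * w (.inl l)).re = (w (.inl l)).re • (s - τ l) :=
    re_add_I_mul s (hpos l).ne'
  have hinr (s : ℝ) (j) : ((s + I) * w (.inr j)).re = (w (.inr j)).re • (s - μ j) :=
    re_add_I_mul s (hneg j).ne
  have hgeneric {s : ℝ} (hs : ∀ l, τ l ≠ s) (hs' : ∀ j, μ j ≠ s) (i) :
      ((s + I) * w i).re ≠ 0 := by
    rcases i with l | j
    · exact hinl s l ▸ smul_ne_zero (hpos l).ne' (sub_ne_zero.mpr (hs l).symm)
    · exact hinr s j ▸ smul_ne_zero (hneg j).ne (sub_ne_zero.mpr (hs' j).symm)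
  have hlower {s : ℝ} (hs : ∀ l, τ l ≠ s) (hs' : ∀ j, μ j ≠ s) :
      #{j | μ j < s} ≤ #{l | τ l < s} := by
    have h := hcount (s + I) (hgeneric hs hs')
    simp only [card_subtype_sum, hinl, hinr, smul_pos_iff_of_pos_left (hpos _),
      smul_pos_iff_of_neg_left (hneg _), sub_pos, sub_neg] at h
    have := card_lt_add_card_gt hs'
    simp only [Fintype.card_fin] at this
    omega
  have hupper {s : ℝ} (hs : ∀ l, τ l ≠ s) (hs' : ∀ j, μ j ≠ s) :
      #{l | τ l < s} ≤ #{j | μ j < s} + d := by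
    have h := hcount (-(s + I)) fun i => by
      simpa only [neg_mul, neg_re] using neg_ne_zero.mpr (hgeneric hs hs' i)
    simp only [card_subtype_sum, neg_mul, neg_re, neg_pos, hinl, hinr,
      smul_neg_iff_of_pos_left (hpos _), smul_neg_iff_of_neg_left (hneg _), sub_pos, sub_neg] at h
    have := card_lt_add_card_gt hs
    simp only [Fintype.card_fin] at this
    omega
  exact isDiagonalCompression_of_generalized_interlacing hμ hτ
    (fun i => apply_le_of_card_lt_le (e := 0) hτ hμ (fun s hs hs' => hlower hs hs') le_rfl)
    fun i => apply_le_of_card_lt_le (e := d) hμ hτ (fun s hs' hs => hupper hs hs') le_rfl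

end Slopes

section DiagonalForms

open scoped Matrix

theorem ofReal_sum_norm_sq_mul {m : Type*} [Fintype m] [DecidableEq m] (ρ : m → ℝ) (x : m → ℂ) :
    ((∑ l, ‖x l‖ ^ 2 * ρ l : ℝ) : ℂ) = star x ⬝ᵥ (Matrix.diagonal ρ).map ofRealHom *ᵥ x := by
  rw [Matrix.diagonal_map (map_zero _), ofReal_sum]
  refine Finset.sum_congr rfl fun l _ => ?_
  rw [Matrix.mulVec_diagonal, ofReal_mul, ofReal_pow, ← conj_mul', Pi.star_apply, starRingEnd_apply,
    ofRealHom_eq_coe]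
  ring

theorem sum_norm_sq_mulVec_mul {m n : Type*} [Fintype m] [Fintype n] [DecidableEq m]
    [DecidableEq n] {Q : Matrix m n ℝ} {ρ : m → ℝ} {σ : n → ℝ}
    (hQ : Qᵀ * Matrix.diagonal ρ * Q = Matrix.diagonal σ) (v : n → ℂ) :
    ∑ l, ‖(Q.map ofRealHom *ᵥ v) l‖ ^ 2 * ρ l = ∑ j, ‖v j‖ ^ 2 * σ j := by
  have hstar : (Q.map ofRealHom)ᴴ = Qᵀ.map ofRealHom := by
    ext
    simp
  rw [← ofReal_inj, ofReal_sum_norm_sq_mul, ofReal_sum_norm_sq_mul, ← hQ, Matrix.star_mulVec,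
    hstar, Matrix.map_mul, Matrix.map_mul, ← Matrix.mulVec_mulVec, ← Matrix.mulVec_mulVec,
    ← Matrix.dotProduct_mulVec]

theorem norm_sq_inv_sqrt_abs_mul {h : ℝ} (hh : h ≠ 0) (a : ℂ) :
    ‖(((√|h|)⁻¹ : ℝ) : ℂ) * a‖ ^ 2 * |h| = ‖a‖ ^ 2 := by
  rw [norm_mul, norm_real, mul_pow, norm_inv, inv_pow, Real.norm_eq_abs, sq_abs,
    Real.sq_sqrt (abs_nonneg _)]
  field_simp [abs_ne_zero.mpr hh]

theorem exists_submodule_sum_eq_zero_of_isDiagonalCompression {m n : Type*} [Fintype m] [Fintype n]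
    [DecidableEq m] [DecidableEq n] {w : m ⊕ n → ℂ} (hpos : ∀ l, 0 < (w (.inl l)).re)
    (hneg : ∀ j, (w (.inr j)).re < 0)
    (hw : IsDiagonalCompression (fun l => (w (.inl l)).im / (w (.inl l)).re)
      fun j => (w (.inr j)).im / (w (.inr j)).re) :
    ∃ W : Submodule ℂ (m ⊕ n → ℂ), Module.finrank ℂ W = Fintype.card n ∧
      ∀ x ∈ W, ∑ i, ((‖x i‖ ^ 2 : ℝ) : ℂ) * w i = 0 := by
  obtain ⟨Q, hQ, hQw⟩ := hw
  let c (i : m ⊕ n) : ℝ := (√|(w i).re|)⁻¹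
  let T : (n → ℂ) →ₗ[ℂ] (m ⊕ n → ℂ) := LinearMap.pi <| Sum.elim
    (fun l => (c (.inl l) : ℂ) • LinearMap.proj l ∘ₗ (Q.map ofRealHom).mulVecLin)
    (fun j => (c (.inr j) : ℂ) • LinearMap.proj j)
  have hne (i) : (w i).re ≠ 0 := i.rec (fun l => (hpos l).ne') fun j => (hneg j).ne
  have hc (i) : (c i : ℂ) ≠ 0 :=
    ofReal_ne_zero.mpr (inv_ne_zero (Real.sqrt_ne_zero'.mpr (abs_pos.mpr (hne i))))
  have hnorm (i) (a : ℂ) : ‖(c i : ℂ) * a‖ ^ 2 * |(w i).re| = ‖a‖ ^ 2 :=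
    norm_sq_inv_sqrt_abs_mul (hne i) a
  have hcancel {ρ : m → ℝ} {σ : n → ℝ} (hQ : Qᵀ * Matrix.diagonal ρ * Q = Matrix.diagonal σ)
      (v : n → ℂ) : ∑ i, ‖T v i‖ ^ 2 * ((w i).re * Sum.elim ρ σ i) = 0 := by
    have hinl (l) : ‖T v (.inl l)‖ ^ 2 * (w (.inl l)).re = ‖(Q.map ofRealHom *ᵥ v) l‖ ^ 2 := by
      rw [← hnorm (.inl l) ((Q.map ofRealHom *ᵥ v) l), abs_of_pos (hpos l)]
      rfl
    have hinr (j) : ‖T v (.inr j)‖ ^ 2 * (w (.inr j)).re = -‖v j‖ ^ 2 := by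
      rw [← hnorm (.inr j) (v j), abs_of_neg (hneg j), mul_neg, neg_neg]
      rfl
    simp only [← mul_assoc, Fintype.sum_sum_type, hinl, hinr, Sum.elim_inl, Sum.elim_inr, neg_mul,
      Finset.sum_neg_distrib, sum_norm_sq_mulVec_mul hQ, add_neg_cancel]
  refine ⟨LinearMap.range T, ?_, ?_⟩
  · have hT : Function.Injective T := fun u v huv => funext fun j =>
      mul_left_cancel₀ (hc (.inr j)) (congrFun huv (.inr j))
    rw [LinearMap.finrank_range_of_inj hT, Module.finrank_fintype_fun_eq_card]
  · rintro _ ⟨v, rfl⟩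
    apply Complex.ext
    · simpa only [re_sum, re_ofReal_mul, zero_re, Sum.elim_one_one, Pi.one_apply, mul_one] using
        hcancel (ρ := 1) (σ := 1) (by simpa using hQ) v
    · have hslope (i) : (w i).re * Sum.elim (fun l => (w (.inl l)).im / (w (.inl l)).re)
          (fun j => (w (.inr j)).im / (w (.inr j)).re) i = (w i).im := by
        cases i <;> exact mul_div_cancel₀ _ (hne _)
      simpa only [im_sum, im_ofReal_mul, hslope, zero_im] using hcancel hQw v

theorem exists_equiv_sum_monotone {ι α : Type*} [Fintype ι] [LinearOrder α] (P : ι → Prop)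
    [DecidablePred P] (t : ι → α) {p q : ℕ} (hp : Fintype.card {i // P i} = p)
    (hq : Fintype.card {i // ¬P i} = q) :
    ∃ e : Fin p ⊕ Fin q ≃ ι, (∀ l, P (e (.inl l))) ∧ (∀ j, ¬P (e (.inr j))) ∧
      Monotone (fun l => t (e (.inl l))) ∧ Monotone (fun j => t (e (.inr j))) := by
  obtain ⟨a, ha⟩ := exists_equiv_fin_monotone (fun i : {i // P i} => t i) hp
  obtain ⟨b, hb⟩ := exists_equiv_fin_monotone (fun i : {i // ¬P i} => t i) hq
  exact ⟨(a.sumCongr b).trans (Equiv.sumCompl P), fun l => (a l).2, fun j => (b j).2, ha, hb⟩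

variable {ι : Type*} [Fintype ι]

theorem exists_submodule_sum_eq_zero_of_card_neg_le {w : ι → ℂ} (hw : ∀ i, (w i).re ≠ 0)
    (hmin : ∀ z : ℂ, (∀ i, (z * w i).re ≠ 0) →
      Fintype.card {i // (w i).re < 0} ≤ Fintype.card {i // 0 < (z * w i).re}) :
    ∃ W : Submodule ℂ (ι → ℂ), Module.finrank ℂ W = Fintype.card {i // (w i).re < 0} ∧
      ∀ x ∈ W, ∑ i, ((‖x i‖ ^ 2 : ℝ) : ℂ) * w i = 0 := by
  have hnot (i) : ¬0 < (w i).re ↔ (w i).re < 0 := by rw [not_lt, (hw i).le_iff_lt]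
  set k := Fintype.card {i // (w i).re < 0}
  obtain ⟨d, hd⟩ := Nat.exists_eq_add_of_le (hmin 1 (by simpa using hw))
  simp only [one_mul] at hd
  obtain ⟨e, hpos, hneg, hτ, hμ⟩ := exists_equiv_sum_monotone (fun i => 0 < (w i).re)
    (fun i => (w i).im / (w i).re) hd (Fintype.card_congr (Equiv.subtypeEquivRight hnot))
  simp only [hnot] at hneg
  have hcompr := isDiagonalCompression_slopes (w := w ∘ e) hpos hneg hτ hμ fun z hz => by
    refine (hmin z (e.forall_congr_right.mp hz)).trans_eq (Fintype.card_congr ?_)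
    exact (e.subtypeEquiv fun _ => Iff.rfl).symm
  obtain ⟨W, hWk, hW⟩ :=
    exists_submodule_sum_eq_zero_of_isDiagonalCompression (w := w ∘ e) hpos hneg hcompr
  refine ⟨W.map (LinearEquiv.funCongrLeft ℂ ℂ e.symm).toLinearMap, ?_, ?_⟩
  · rw [LinearEquiv.finrank_map_eq, hWk, Fintype.card_fin]
  · rintro _ ⟨x, hx, rfl⟩
    rw [← hW x hx, ← e.sum_comp]
    simp [LinearMap.funLeft_apply]

/-- Rotate `w` so that it has the fewest possible negative real parts: their number is then minimal
among the counts of `hcount`, and at least `k`. -/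
theorem exists_submodule_sum_eq_zero {w : ι → ℂ} {k : ℕ} (hw : ∀ i, w i ≠ 0)
    (hcount : ∀ z : ℂ, (∀ i, (z * w i).re ≠ 0) → k ≤ Fintype.card {i // 0 < (z * w i).re}) :
    ∃ W : Submodule ℂ (ι → ℂ), k ≤ Module.finrank ℂ W ∧
      ∀ x ∈ W, ∑ i, ((‖x i‖ ^ 2 : ℝ) : ℂ) * w i = 0 := by
  have hgeneric : ∃ z : ℂ, ∀ i, (z * w i).re ≠ 0 := by
    have hae : ∀ᵐ z : ℂ, ∀ i, z * w i + conj z * conj (w i) ≠ 0 :=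
      MeasureTheory.ae_all_iff.mpr fun i => ae_mul_add_conj_mul_ne_zero (.inl (hw i))
    obtain ⟨z, hz⟩ := hae.exists
    refine ⟨z, fun i hi => hz i ?_⟩
    rw [← map_mul, add_conj, hi, mul_zero, ofReal_zero]
  obtain ⟨z₀, hmin⟩ := exists_minimalFor_of_wellFoundedLT _
    (fun z : ℂ => Fintype.card {i // 0 < (z * w i).re}) hgeneric
  have hz₀ : ∀ i, (z₀ * w i).re ≠ 0 := hmin.prop
  have hcard : Fintype.card {i // (-z₀ * w i).re < 0} = Fintype.card {i // 0 < (z₀ * w i).re} := by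
    simp only [neg_mul, neg_re, neg_lt_zero]
  obtain ⟨W, hWk, hW⟩ := exists_submodule_sum_eq_zero_of_card_neg_le (w := fun i => -z₀ * w i)
    (by simpa only [neg_mul, neg_re, neg_ne_zero] using hz₀) fun z hz => by
      simp only [← mul_assoc] at hz ⊢
      exact hcard.trans_le (le_of_not_gt (hmin.not_lt hz))
  refine ⟨W, (hcount z₀ hz₀).trans_eq (hcard.symm.trans hWk.symm), fun x hx => ?_⟩
  have hmul : -z₀ * ∑ i, ((‖x i‖ ^ 2 : ℝ) : ℂ) * w i = 0 := by
    simpa only [Finset.mul_sum, mul_left_comm] using hW x hx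
  refine (mul_eq_zero.mp hmul).elim (fun h => Finset.sum_eq_zero fun i _ => ?_) id
  exact absurd (by simp [neg_eq_zero.mp h]) (hz₀ i)

end DiagonalForms

/-- Li and Sze's theorem in terms of forms. -/
theorem HasNonnegSubspaces.exists_isotropic {V : Type*} [AddCommGroup V] [Module ℂ V]
    [FiniteDimensional ℂ V] {φ : V →ₗ⋆[ℂ] V →ₗ[ℂ] ℂ} {k : ℕ} (hφ : HasNonnegSubspaces φ k) :
    ∃ W : Submodule ℂ V, k ≤ Module.finrank ℂ W ∧ ∀ x ∈ W, φ x x = 0 := by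
  induction hd : Module.finrank ℂ V using Nat.strong_induction_on generalizing V k with
  | _ d ih =>
  by_cases hdiag : ∀ v, IsPencilEigenvector φ v → φ v v ≠ 0
  · obtain ⟨n, b, hb, hb0⟩ := exists_basis_isOrthoᵢ hdiag
    obtain ⟨W, hWk, hW⟩ := exists_submodule_sum_eq_zero hb0 fun z hz => hφ.le_card_pos b hb hz
    refine ⟨W.map b.equivFun.symm.toLinearMap, by rwa [LinearEquiv.finrank_map_eq], ?_⟩
    rintro _ ⟨x, hx, rfl⟩
    rw [apply_self_eq_sum_of_isOrthoᵢ b hb, LinearEquiv.coe_coe, ← hW x hx]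
    simp only [← Module.Basis.equivFun_apply, LinearEquiv.apply_symm_apply]
  · push Not at hdiag
    obtain ⟨v, hv, hv0⟩ := hdiag
    obtain _ | k := k
    · exact ⟨⊥, Nat.zero_le _, by simp⟩
    obtain ⟨U, hvU, horth, hU⟩ := hφ.exists_domRestrict_of_isotropic hv hv0
    have hlt : Module.finrank ℂ U < d :=
      hd ▸ Submodule.finrank_lt fun htop => hvU (htop ▸ Submodule.mem_top)
    obtain ⟨T, hTk, hT⟩ := ih _ hlt hU rfl
    exact exists_isotropic_of_domRestrict hv0 hvU horth hTk hT

section RankKRange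

theorem isOrthProj_starProjection (V : Submodule ℂ H) [V.HasOrthogonalProjection] :
    IsOrthProj V.starProjection :=
  ⟨isSelfAdjoint_starProjection V, V.isIdempotentElem_starProjection⟩

omit [CompleteSpace H] in
theorem opRank_starProjection (V : Submodule ℂ H) [V.HasOrthogonalProjection] :
    opRank V.starProjection = Module.rank ℂ V := by
  rw [opRank, Submodule.range_starProjection]

theorem mem_rankKRange_iff {k : ℕ} {A : H →L[ℂ] H} {lam : ℂ} :
    lam ∈ rankKRange k A ↔
      ∃ V : Submodule ℂ H, Module.rank ℂ V = k ∧ ∀ x ∈ V, ⟪x, A x⟫_ℂ = lam * ⟪x, x⟫_ℂ := by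
  constructor
  · rintro ⟨P, ⟨hsa, hid⟩, hk, hP⟩
    refine ⟨LinearMap.range (P : H →ₗ[ℂ] H), hk, ?_⟩
    rintro _ ⟨y, rfl⟩
    have hPP : P (P y) = P y := DFunLike.congr_fun hid y
    have hPAP : P (A (P y)) = lam • P y := DFunLike.congr_fun hP y
    calc ⟪P y, A (P y)⟫_ℂ = ⟪P (P y), A (P y)⟫_ℂ := by rw [hPP]
      _ = ⟪P y, P (A (P y))⟫_ℂ := hsa.isSymmetric _ _
      _ = lam * ⟪P y, P y⟫_ℂ := by rw [hPAP, inner_smul_right]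
  · rintro ⟨V, hV, h⟩
    have : FiniteDimensional ℂ V := Module.finite_of_rank_eq_nat hV
    set P := V.starProjection
    have hproj := isOrthProj_starProjection V
    have hPP (x : H) : P (P x) = P x := DFunLike.congr_fun hproj.2 x
    have hzero : (P ∘L (A - lam • 1) ∘L P).toLinearMap = 0 := by
      refine (inner_map_self_eq_zero _).mp fun x => inner_eq_zero_symm.mp ?_
      calc ⟪x, P ((A - lam • 1) (P x))⟫_ℂ = ⟪P x, (A - lam • 1) (P x)⟫_ℂ :=
            (V.inner_starProjection_left_eq_right _ _).symm
        _ = ⟪P x, A (P x)⟫_ℂ - lam * ⟪P x, P x⟫_ℂ := by simp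
        _ = 0 := sub_eq_zero.mpr (h _ (V.starProjection_apply_mem x))
    refine ⟨P, hproj, (opRank_starProjection V).trans hV, ContinuousLinearMap.ext fun x => ?_⟩
    have hx := LinearMap.congr_fun hzero x
    simpa [sub_eq_zero, hPP] using hx

theorem rankKRange_subset_rankKRange_add {k r : ℕ} (A : H →L[ℂ] H) {F : H →L[ℂ] H}
    (hF : opRank F ≤ r) : rankKRange k A ⊆ rankKRange (k - r) (A + F) := by
  intro lam hlam
  obtain ⟨V, hV, hAV⟩ := mem_rankKRange_iff.mp hlam
  have : FiniteDimensional ℂ V := Module.finite_of_rank_eq_nat hV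
  set f : V →ₗ[ℂ] H := F.toLinearMap ∘ₗ V.subtype
  have hker : k - r ≤ Module.finrank ℂ (LinearMap.ker f) := by
    have hrank : Module.finrank ℂ (LinearMap.range f) ≤ r := Module.finrank_le_of_rank_le <|
      (Submodule.rank_mono (LinearMap.range_comp_le_range _ _)).trans hF
    have hsum := f.finrank_range_add_finrank_ker
    rw [Module.finrank_eq_of_rank_eq hV] at hsum
    lia
  obtain ⟨W, hW⟩ := exists_submodule_finrank_eq hker
  set W' : Submodule ℂ V := W.map (LinearMap.ker f).subtype
  have hle : W' ≤ LinearMap.ker f := Submodule.map_subtype_le _ _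
  refine mem_rankKRange_iff.mpr ⟨W'.map V.subtype, ?_, ?_⟩
  · rw [← Module.finrank_eq_rank, Submodule.finrank_map_subtype_eq,
      Submodule.finrank_map_subtype_eq, hW]
  · rintro _ ⟨x, hx, rfl⟩
    have hFx : F x = 0 := hle hx
    simpa [hFx] using hAV x x.2

end RankKRange

section Directions

theorem exists_mem_Ico_mul_exp_eq_neg_norm (z : ℂ) :
    ∃ ξ ∈ Set.Ico (0 : ℝ) (2 * Real.pi), z * exp (ξ * I) = -‖z‖ := by
  refine ⟨Real.pi - arg z, ⟨?_, ?_⟩, ?_⟩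
  · linarith [arg_le_pi z]
  · linarith [neg_pi_lt_arg z]
  · conv_lhs => enter [1]; rw [← norm_mul_exp_arg_mul_I z]
    rw [mul_assoc, ← Complex.exp_add, ofReal_sub, ← add_mul, add_sub_cancel, exp_pi_mul_I]
    simp

theorem isSelfAdjoint_reOp (T : H →L[ℂ] H) : IsSelfAdjoint (reOp T) := by
  rw [reOp, ← ContinuousLinearMap.star_eq_adjoint]
  exact .smul (by simp [isSelfAdjoint_iff]) (.add_star_self T)

theorem re_inner_reOp (T : H →L[ℂ] H) (x : H) : (⟪x, reOp T x⟫_ℂ).re = (⟪x, T x⟫_ℂ).re := by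
  rw [reOp, smul_apply, add_apply, inner_smul_right,
    inner_add_right, ContinuousLinearMap.adjoint_inner_right, ← inner_conj_symm _ x, add_conj]
  simp

theorem exists_orthonormalBasis_re_inner_eq_sum [FiniteDimensional ℂ H] (T : H →L[ℂ] H) :
    ∃ e : OrthonormalBasis (Fin (Module.finrank ℂ H)) ℂ H,
      ∀ x, (⟪x, T x⟫_ℂ).re = ∑ i, (⟪e i, T (e i)⟫_ℂ).re * ‖⟪e i, x⟫_ℂ‖ ^ 2 := by
  have hsymm : (reOp T : H →ₗ[ℂ] H).IsSymmetric := (isSelfAdjoint_reOp T).isSymmetric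
  set e := hsymm.eigenvectorBasis rfl
  have heigen (i : Fin (Module.finrank ℂ H)) :
      reOp T (e i) = (hsymm.eigenvalues rfl i : ℂ) • e i := hsymm.apply_eigenvectorBasis rfl i
  have hdiag (i : Fin (Module.finrank ℂ H)) :
      (⟪e i, T (e i)⟫_ℂ).re = hsymm.eigenvalues rfl i := by
    rw [← re_inner_reOp, heigen, inner_smul_right, inner_self_eq_norm_sq_to_K, e.norm_eq_one]
    simp
  refine ⟨e, fun x => ?_⟩
  rw [← re_inner_reOp, ← e.sum_inner_mul_inner x, re_sum]
  refine Finset.sum_congr rfl fun i _ => ?_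
  have hinner : ⟪e i, reOp T x⟫_ℂ = hsymm.eigenvalues rfl i * ⟪e i, x⟫_ℂ := by
    rw [← ContinuousLinearMap.coe_coe, ← hsymm, ContinuousLinearMap.coe_coe, heigen,
      inner_smul_left, conj_ofReal]
  rw [hinner, hdiag, mul_left_comm, ← inner_conj_symm x, RCLike.conj_mul, ← RCLike.ofReal_pow]
  exact re_mul_ofReal _ _

theorem exists_isOrthProj_inner_eq_sum {ι : Type*} {e : ι → H} (he : Orthonormal ℂ e)
    (J : Finset ι) :
    ∃ P : H →L[ℂ] H, IsOrthProj P ∧ opRank P = J.card ∧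
      ∀ x, ⟪x, P x⟫_ℂ = ((∑ i ∈ J, ‖⟪e i, x⟫_ℂ‖ ^ 2 : ℝ) : ℂ) := by
  classical
  set b := OrthonormalBasis.span he J
  refine ⟨(Submodule.span ℂ (J.image e : Set H)).starProjection, isOrthProj_starProjection _, ?_,
    fun x => ?_⟩
  · rw [opRank_starProjection, rank_eq_card_basis b.toBasis, Fintype.card_coe]
  · rw [b.starProjection_eq_sum_rankOne, sum_apply, inner_sum, ofReal_sum,
      ← Finset.sum_coe_sort J]
    refine Finset.sum_congr rfl fun i _ => ?_
    rw [InnerProductSpace.rankOne_apply, inner_smul_right, ← inner_conj_symm x, mul_conj,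
      normSq_eq_norm_sq, OrthonormalBasis.span_apply]

omit [CompleteSpace H] in
theorem abs_re_mul_inner_apply_le (A : H →L[ℂ] H) {x : H} (hx : ‖x‖ = 1) (z : ℂ) :
    |(z * ⟪x, A x⟫_ℂ).re| ≤ ‖z‖ * ‖A‖ :=
  calc |(z * ⟪x, A x⟫_ℂ).re| ≤ ‖z‖ * ‖⟪x, A x⟫_ℂ‖ := (abs_re_le_norm _).trans (norm_mul_le _ _)
    _ ≤ ‖z‖ * (‖x‖ * ‖A x‖) := by gcongr; exact norm_inner_le_norm _ _
    _ ≤ ‖z‖ * ‖A‖ := by gcongr; simpa [hx] using A.le_opNorm x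

theorem le_card_nonneg_of_forall_finset {ι : Type*} [Fintype ι] [DecidableEq ι] {k r : ℕ}
    (hrk : r < k) (hk : k ≤ Fintype.card ι) {d : ι → ℝ} {t : ℝ}
    (ht : ∀ i j, d i < 0 → d j < t)
    (h : ∀ J : Finset ι, J.card = r →
      k - r ≤ Fintype.card {i // 0 ≤ d i - if i ∈ J then t else 0}) :
    k ≤ Fintype.card {i // 0 ≤ d i} := by
  by_contra! hlt
  obtain ⟨i₀, hi₀⟩ : ∃ i, d i < 0 := by
    by_contra! hd
    exact (hlt.trans_le hk).ne (Fintype.card_of_subtype Finset.univ (by simpa using hd))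
  rw [Fintype.card_subtype] at hlt
  set N := Finset.univ.filter fun i => 0 ≤ d i
  obtain ⟨J, hJ, hNJ⟩ : ∃ J : Finset ι, J.card = r ∧ (N \ J).card < k - r := by
    obtain hle | hle := le_total r N.card
    · obtain ⟨J, hJN, hJ⟩ := Finset.exists_subset_card_eq hle
      exact ⟨J, hJ, by rw [Finset.card_sdiff_of_subset hJN]; lia⟩
    · obtain ⟨J, hNJ, -, hJ⟩ :=
        Finset.exists_subsuperset_card_eq N.subset_univ hle (hrk.le.trans hk)
      exact ⟨J, hJ, by rw [Finset.sdiff_eq_empty_iff_subset.mpr hNJ, Finset.card_empty]; lia⟩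
  have hsub : (Finset.univ.filter fun i => 0 ≤ d i - if i ∈ J then t else 0) ⊆ N \ J := by
    intro i hi
    by_cases hiJ : i ∈ J
    · have := ht i₀ i hi₀
      simp [hiJ, this.not_ge] at hi
    · simpa [N, hiJ] using hi
  have := h J hJ
  rw [Fintype.card_subtype] at this
  exact (this.trans (Finset.card_le_card hsub)).not_gt hNJ

theorem exists_nonneg_submodule_of_forall_mem_rankKRange [FiniteDimensional ℂ H] {k r : ℕ}
    (hrk : r < k) (hk : k ≤ Module.finrank ℂ H) {A : H →L[ℂ] H} {lam z w : ℂ}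
    (hzw : z * w = -‖z‖)
    (h : ∀ P : H →L[ℂ] H, IsOrthProj P → opRank P = r →
      lam ∈ rankKRange (k - r) (A + (2 * w * ‖A‖ : ℂ) • P)) :
    ∃ W : Submodule ℂ H, k ≤ Module.finrank ℂ W ∧
      ∀ x ∈ W, 0 ≤ (z * (⟪x, A x⟫_ℂ - lam * ⟪x, x⟫_ℂ)).re := by
  have hform (x : H) :
      ⟪x, (z • (A - lam • 1)) x⟫_ℂ = z * (⟪x, A x⟫_ℂ - lam * ⟪x, x⟫_ℂ) := by
    simp
  obtain ⟨e, he⟩ := exists_orthonormalBasis_re_inner_eq_sum (z • (A - lam • 1))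
  simp only [hform] at he
  set d := fun i => (z * (⟪e i, A (e i)⟫_ℂ - lam * ⟪e i, e i⟫_ℂ)).re
  have hd (i : Fin (Module.finrank ℂ H)) : d i = (z * ⟪e i, A (e i)⟫_ℂ).re - (z * lam).re := by
    simp [d, mul_sub]
  have hbound (i : Fin (Module.finrank ℂ H)) :=
    abs_le.mp (abs_re_mul_inner_apply_le A (e.norm_eq_one i) z)
  have hcard : k ≤ Fintype.card {i // 0 ≤ d i} := by
    refine le_card_nonneg_of_forall_finset (t := 2 * (‖z‖ * ‖A‖)) hrk (by simpa using hk)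
      (fun i j hi => ?_) fun J hJ => ?_
    · linarith [hd i, hd j, (hbound i).1, (hbound j).2]
    · obtain ⟨P, hP, hPr, hPx⟩ := exists_isOrthProj_inner_eq_sum e.orthonormal J
      obtain ⟨W, hWk, hW⟩ := mem_rankKRange_iff.mp (h P hP (by rw [hPr, hJ]))
      rw [← Module.finrank_eq_of_rank_eq hWk]
      refine finrank_le_card_of_sum_nonneg e.toBasis _ W fun x hx => ge_of_eq ?_
      have hmem : ⟪x, A x⟫_ℂ + 2 * w * ‖A‖ * ⟪x, P x⟫_ℂ = lam * ⟪x, x⟫_ℂ := by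
        simpa [inner_add_right, inner_smul_right] using hW x hx
      have hshift : z * (⟪x, A x⟫_ℂ - lam * ⟪x, x⟫_ℂ) =
          (2 * (‖z‖ * ‖A‖) : ℝ) * ⟪x, P x⟫_ℂ := by
        push_cast
        linear_combination z * hmem - 2 * ‖A‖ * ⟪x, P x⟫_ℂ * hzw
      simp only [OrthonormalBasis.coe_toBasis_repr_apply, e.repr_apply_apply, sub_mul,
        Finset.sum_sub_distrib, ite_mul, zero_mul, Finset.sum_ite_mem, Finset.univ_inter]
      rw [← he, hshift, hPx, re_ofReal_mul, ofReal_re, Finset.mul_sum, sub_self]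
  obtain ⟨W, hWk, hW⟩ := exists_submodule_sum_nonneg e.toBasis d
  refine ⟨W, hWk ▸ hcard, fun x hx => ?_⟩
  have hx' := hW x hx
  simp only [OrthonormalBasis.coe_toBasis_repr_apply, e.repr_apply_apply] at hx'
  rwa [he]

end Directions

theorem rankKRange_eq_iInter_perturbed_finiteDim_general [FiniteDimensional ℂ H] {r k : ℕ}
    (hrk : r < k) (hk : k ≤ Module.finrank ℂ H) (A : H →L[ℂ] H) (S : Set (H →L[ℂ] H))
    (hSrank : ∀ F ∈ S, opRank F ≤ r)
    (hS0 : ∀ ξ ∈ Set.Ico (0 : ℝ) (2 * Real.pi), ∀ P : H →L[ℂ] H, IsOrthProj P → opRank P = r →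
      ((2 * Complex.exp (ξ * Complex.I) * (‖A‖ : ℂ)) • P) ∈ S) :
    rankKRange k A = ⋂ F ∈ S, rankKRange (k - r) (A + F) := by
  refine Set.Subset.antisymm
    (Set.subset_iInter₂ fun F hF => rankKRange_subset_rankKRange_add A (hSrank F hF)) ?_
  intro lam hlam
  rw [Set.mem_iInter₂] at hlam
  have hnonneg (z : ℂ) : ∃ W : Submodule ℂ H, k ≤ Module.finrank ℂ W ∧
      ∀ x ∈ W, 0 ≤ (z * (⟪x, A x⟫_ℂ - lam * ⟪x, x⟫_ℂ)).re := by
    obtain ⟨ξ, hξ, hzξ⟩ := exists_mem_Ico_mul_exp_eq_neg_norm z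
    exact exists_nonneg_submodule_of_forall_mem_rankKRange hrk hk hzξ
      fun P hP hPr => hlam _ (hS0 ξ hξ P hP hPr)
  let φ : H →ₗ⋆[ℂ] H →ₗ[ℂ] ℂ := (innerₛₗ ℂ).compl₂ (A - lam • 1).toLinearMap
  have hφ (x : H) : φ x x = ⟪x, A x⟫_ℂ - lam * ⟪x, x⟫_ℂ := by
    simp [φ, inner_sub_right, inner_smul_right]
  have hsub : HasNonnegSubspaces φ k := .of_forall fun z => by simpa only [hφ] using hnonneg z
  obtain ⟨W, hWk, hW⟩ := hsub.exists_isotropic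
  obtain ⟨V, hV⟩ := exists_submodule_finrank_eq hWk
  refine mem_rankKRange_iff.mpr ⟨V.map W.subtype, ?_, ?_⟩
  · rw [← Module.finrank_eq_rank, Submodule.finrank_map_subtype_eq, hV]
  · rintro _ ⟨x, -, rfl⟩
    exact sub_eq_zero.mp ((hφ x).symm.trans (hW x x.2))

/-- Finite-dimensional case (operators on `ℂ^n`): for `1 ≤ r < k ≤ n` and any
collection `𝒮` of operators of rank at most `r` containing
`𝒮₀ = {2e^{iξ}‖A‖P : P a rank-r orthogonal projection, ξ ∈ [0,2π)}`,
`Λ_k(A)` is the intersection of the sets `Λ_{k-r}(A+F)` for `F ∈ 𝒮`. -/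
theorem rankKRange_eq_iInter_perturbed_finiteDim
    (n r k : ℕ) (hr : 1 ≤ r) (hrk : r < k) (hk : k ≤ n)
    (A : EuclideanSpace ℂ (Fin n) →L[ℂ] EuclideanSpace ℂ (Fin n))
    (S : Set (EuclideanSpace ℂ (Fin n) →L[ℂ] EuclideanSpace ℂ (Fin n)))
    (hSrank : ∀ F ∈ S, opRank F ≤ r)
    (hS0 : ∀ ξ ∈ Set.Ico (0 : ℝ) (2 * Real.pi),
      ∀ P : EuclideanSpace ℂ (Fin n) →L[ℂ] EuclideanSpace ℂ (Fin n),
      IsOrthProj P → opRank P = r →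
      ((2 * Complex.exp (ξ * Complex.I) * (‖A‖ : ℂ)) • P) ∈ S) :
    rankKRange k A = ⋂ F ∈ S, rankKRange (k - r) (A + F) := by
  exact rankKRange_eq_iInter_perturbed_finiteDim_general hrk (by simpa using hk) A S hSrank hS0
end
end

section
/- Let ℋ be an infinite-dimensional complex Hilbert space and let T ∈ B(ℋ) be normal with σ(T) ⊆ {ρe^{it} : ρ > 0, t ∈ [s₁,s₂]} for some π ≤ s₁ < s₂ ≤ 2π. Let k be a positive integer, let s₃ ∈ (s₁,s₂), and set ℒ = {ρe^{it} : ρ > 0, t ∈ (s₁,s₃)} and ℛ = {ρe^{it} : ρ > 0, t ∈ (s₃,s₂)}. (a) If ℒ ∩ σ(T) is infinite or contains an eigenvalue of T of infinite multiplicity, then T has a k-dimensional compression T₁ with W(T₁) ⊆ ℒ. (b) If ℛ ∩ σ(T) is infinite or contains an eigenvalue of T of infinite multiplicity, then T has a k-dimensional compression T₂ with W(T₂) ⊆ ℛ. Moreover, if both hypotheses hold, then there exist mutually orthogonal k-dimensional subspaces K₁ and K₂ of ℋ such that the compression of T to K₁ ⊕ K₂ has block-diagonal form T₁ ⊕ T₂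 with W(T₁) ⊆ ℒ and W(T₂) ⊆ ℛ. -/
noncomputable section

open scoped InnerProductSpace
open Complex

variable {H : Type*} [NormedAddCommGroup H] [InnerProductSpace ℂ H] [CompleteSpace H]

/-- The open sector `{ρ e^{it} : ρ > 0, t ∈ (a,b)}`. -/
def openSector (a b : ℝ) : Set ℂ :=
  { z | ∃ ρ t : ℝ, 0 < ρ ∧ t ∈ Set.Ioo a b ∧ z = ρ * Complex.exp (t * Complex.I) }

/-- The closed sector `{ρ e^{it} : ρ > 0, t ∈ [a,b]}`. -/
def closedSector (a b : ℝ) : Set ℂ :=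
  { z | ∃ ρ t : ℝ, 0 < ρ ∧ t ∈ Set.Icc a b ∧ z = ρ * Complex.exp (t * Complex.I) }

/-- `z` is an eigenvalue of `T` of infinite multiplicity. -/
def HasInfMultEigenvalue (T : H →L[ℂ] H) (z : ℂ) : Prop :=
  ¬ FiniteDimensional ℂ (LinearMap.ker ((T : H →ₗ[ℂ] H) - z • (LinearMap.id : H →ₗ[ℂ] H)))

/-!
Let `E` be the spectral measure of the normal operator `T`. For closed convex `C`, every unit vector
`x` in the range of `E(C)` satisfies `⟪x, T x⟫ ∈ C`, and disjoint closed sets have orthogonal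
`T`-invariant ranges. A sector of opening at most `π` is open and convex, so any `k` of its spectral
points lie in the interior of a polytope `C` inside the sector, and then `E(C)` has rank at least
`k`; for an eigenvalue `z` of infinite multiplicity take `C = {z}`. Any `k`-dimensional subspaces of
the ranges obtained for the two sectors serve as `K₁` and `K₂`.
-/

theorem openSector_eq_image_exp (a b : ℝ) : openSector a b = exp '' (im ⁻¹' Set.Ioo a b) := by
  ext z
  constructor
  · rintro ⟨ρ, t, hρ, ht, rfl⟩
    refine ⟨Real.log ρ + t * I, by simpa using ht, ?_⟩
    rw [exp_add, ← ofReal_exp, Real.exp_log hρ]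
  · rintro ⟨w, hw, rfl⟩
    refine ⟨Real.exp w.re, w.im, Real.exp_pos _, hw, ?_⟩
    rw [ofReal_exp, ← exp_add, re_add_im]

theorem isOpen_openSector (a b : ℝ) : IsOpen (openSector a b) := by
  rw [openSector_eq_image_exp]
  exact isOpenMap_exp _ (isOpen_Ioo.preimage continuous_im)

theorem disjoint_openSector {a b c d : ℝ} (hbc : b ≤ c) (had : d - a ≤ 2 * Real.pi) :
    Disjoint (openSector a b) (openSector c d) := by
  simp only [openSector_eq_image_exp, Set.disjoint_left]
  rintro _ ⟨v, ⟨hav, hvb⟩, rfl⟩ ⟨w, ⟨hcw, hwd⟩, hwv⟩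
  obtain ⟨n, rfl⟩ := exp_eq_exp_iff_exists_int.1 hwv
  have him : (v + n * (2 * Real.pi * I)).im = v.im + n * (2 * Real.pi) := by simp
  rw [him] at hcw hwd
  have hn_pos : (0 : ℝ) < n := by nlinarith [Real.pi_pos]
  have hn_lt : (n : ℝ) < 1 := by nlinarith [Real.pi_pos]
  norm_cast at hn_pos hn_lt
  lia

theorem mem_openSector_iff {a b : ℝ} (hab : a < b) (hba : b - a ≤ Real.pi) (z : ℂ) :
    z ∈ openSector a b ↔ 0 < (exp (-a * I) * z).im ∧ (exp (-b * I) * z).im < 0 := by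
  have im_rotate (c ρ t : ℝ) :
      (exp (-c * I) * (ρ * exp (t * I))).im = ρ * Real.sin (t - c) := by
    rw [mul_left_comm, ← exp_add, im_ofReal_mul, ← exp_ofReal_mul_I_im]
    push_cast
    ring_nf
  constructor
  · rintro ⟨ρ, t, hρ, ⟨hat, htb⟩, rfl⟩
    rw [im_rotate, im_rotate]
    exact ⟨mul_pos hρ (Real.sin_pos_of_pos_of_lt_pi (by linarith) (by linarith)),
      mul_neg_of_pos_of_neg hρ (Real.sin_neg_of_neg_of_neg_pi_lt (by linarith) (by linarith))⟩
  · rintro ⟨ha, hb⟩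
    set w : ℂ := exp (-a * I) * z with hw
    have hz : z = ‖w‖ * exp ((w.arg + a : ℝ) * I) := by
      rw [ofReal_add, add_mul, exp_add, ← mul_assoc, norm_mul_exp_arg_mul_I, hw, mul_right_comm,
        ← exp_add, neg_mul, neg_add_cancel, exp_zero, one_mul]
    have harg_pos : 0 < w.arg := by
      refine (arg_nonneg_iff.2 ha.le).lt_of_ne' fun h ↦ ?_
      exact ha.ne' (arg_eq_zero_iff.1 h).2
    have harg_le : w.arg ≤ Real.pi := arg_le_pi w
    refine ⟨‖w‖, w.arg + a, norm_pos_iff.2 fun h ↦ by simp [h] at ha, ⟨by linarith, ?_⟩, hz⟩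
    by_contra! hle
    rw [hz, im_rotate] at hb
    exact hb.not_ge <| mul_nonneg (norm_nonneg w) <|
      Real.sin_nonneg_of_nonneg_of_le_pi (by linarith) (by linarith)

theorem convex_openSector {a b : ℝ} (hba : b - a ≤ Real.pi) : Convex ℝ (openSector a b) := by
  rcases lt_or_ge a b with hab | hab
  · have hlin (c : ℂ) : IsLinearMap ℝ fun z : ℂ ↦ (c * z).im :=
      (imLm ∘ₗ LinearMap.mulLeft ℝ c).isLinear
    have h_inter : openSector a b =
        {z | 0 < (exp (-a * I) * z).im} ∩ {z | (exp (-b * I) * z).im < 0} :=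
      Set.ext (mem_openSector_iff hab hba)
    rw [h_inter]
    exact (convex_halfSpace_gt (hlin _) 0).inter (convex_halfSpace_lt (hlin _) 0)
  · rw [openSector_eq_image_exp, Set.Ioo_eq_empty_of_le hab, Set.preimage_empty, Set.image_empty]
    exact convex_empty

theorem exists_isClosed_convex_subset_of_finset {E : Type*} [NormedAddCommGroup E]
    [NormedSpace ℝ E] [FiniteDimensional ℝ E] {U : Set E} (hU : IsOpen U) (hUc : Convex ℝ U)
    {s : Finset E} (hs : ↑s ⊆ U) :
    ∃ C ⊆ U, IsClosed C ∧ Convex ℝ C ∧ ↑s ⊆ interior C := by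
  have hsU : convexHull ℝ (s : Set E) ⊆ U := convexHull_min hs hUc
  obtain ⟨t, hst, htU⟩ :=
    (convex_convexHull ℝ (s : Set E)).exists_subset_interior_convexHull_finset_of_isCompact
      (s.finite_toSet.isCompact_convexHull ℝ) (hU.mem_nhdsSet.2 hsU)
  exact ⟨_, htU, t.finite_toSet.isClosed_convexHull ℝ, convex_convexHull ℝ _,
    (subset_convexHull ℝ _).trans hst⟩

theorem mem_spectrum_of_apply_eq_smul {𝕜 E : Type*} [NontriviallyNormedField 𝕜]
    [NormedAddCommGroup E] [NormedSpace 𝕜 E] {T : E →L[𝕜] E} {z : 𝕜} {x : E} (hx : T x = z • x)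
    (hx₀ : x ≠ 0) : z ∈ spectrum 𝕜 T := by
  rintro ⟨u, hu⟩
  have hux : (u : E →L[𝕜] E) x = 0 := by simp [hu, Algebra.algebraMap_eq_smul_one, hx]
  refine hx₀ ?_
  rw [← one_apply_eq_self (F := E →L[𝕜] E) x, ← u.inv_mul, mul_apply_eq_comp, hux, map_zero]

theorem star_apply_of_apply_eq_smul {T : H →L[ℂ] H} [IsStarNormal T] {z : ℂ} {x : H}
    (hx : T x = z • x) : star T x = star z • x := by
  have h_comm : Commute T (star (z • 1)) := by
    rw [star_smul, star_one]
    exact (Commute.one_right T).smul_right _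
  have h_ker : (T - z • 1) x = 0 := by simp [hx]
  rw [← ContinuousLinearMap.IsStarNormal.adjoint_apply_eq_zero_iff h_comm.isStarNormal_sub,
    ← ContinuousLinearMap.star_eq_adjoint] at h_ker
  simpa [sub_eq_zero] using h_ker

theorem cfc_apply_of_apply_eq_smul {T : H →L[ℂ] H} [hT : IsStarNormal T] {z : ℂ} {x : H}
    (hx : T x = z • x) {f : ℂ → ℂ} (hf : ContinuousOn f (spectrum ℂ T)) :
    cfc f T x = f z • x := by
  rcases eq_or_ne x 0 with rfl | hx₀
  · simp
  have hz : z ∈ spectrum ℂ T := mem_spectrum_of_apply_eq_smul hx hx₀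
  suffices ∀ g : C(spectrum ℂ T, ℂ), cfcHom hT g x = g ⟨z, hz⟩ • x by
    rw [cfc_apply f T]
    exact this _
  intro g
  induction g using ContinuousMap.induction_on_of_compact with
  | const r => exact congr($(AlgHomClass.commutes (cfcHom hT) r) x)
  | id => simpa [cfcHom_id] using hx
  | star_id => simpa [map_star, cfcHom_id] using star_apply_of_apply_eq_smul hx
  | add f g hf hg => simp [hf, hg, add_smul]
  | mul f g hf hg => simp [hf, hg, smul_smul, mul_comm]
  | frequently f hf =>
    have hclosed : IsClosed {g | cfcHom hT g x = g ⟨z, hz⟩ • x} :=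
      isClosed_eq ((ContinuousLinearMap.apply ℂ H x).continuous.comp (cfcHom_continuous hT))
        (by fun_prop)
    exact hclosed.mem_of_frequently_of_tendsto hf Filter.tendsto_id

open scoped ComplexOrder in
theorem re_inner_cfc_nonneg {T : H →L[ℂ] H} [IsStarNormal T] {f : ℂ → ℂ}
    (hf : ContinuousOn f (spectrum ℂ T)) (hf_re : ∀ w ∈ spectrum ℂ T, 0 ≤ (f w).re) (x : H) :
    0 ≤ (⟪x, cfc f T x⟫_ℂ).re := by
  have hnonneg : 0 ≤ cfc (fun w ↦ f w + star (f w)) T :=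
    cfc_nonneg fun w hw ↦ by
      rw [Complex.star_def, add_conj]
      exact_mod_cast mul_nonneg zero_le_two (hf_re w hw)
  rw [cfc_add T _ _, cfc_star, ContinuousLinearMap.nonneg_iff_isPositive] at hnonneg
  have h_sum : 0 ≤ (⟪x, cfc f T x⟫_ℂ + ⟪cfc f T x, x⟫_ℂ).re := by
    simpa [inner_add_right, ContinuousLinearMap.star_eq_adjoint,
      ContinuousLinearMap.adjoint_inner_right] using hnonneg.re_inner_nonneg_right x
  have h_symm : (⟪cfc f T x, x⟫_ℂ).re = (⟪x, cfc f T x⟫_ℂ).re := inner_re_symm (𝕜 := ℂ) _ _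
  rw [add_re, h_symm] at h_sum
  linarith

/-- The range of the spectral projection of a normal operator `T` attached to a closed set `K`.
It is cut out by the continuous functional calculus alone: a vector lies in it when every
continuous function of `T` vanishing on `K` kills that vector. -/
def spectralSubspace (T : H →L[ℂ] H) (K : Set ℂ) : Submodule ℂ H where
  carrier := {x | ∀ f : ℂ → ℂ, Continuous f → Set.EqOn f 0 K → cfc f T x = 0}
  zero_mem' := by simp
  add_mem' hx hy f hf hfK := by rw [map_add, hx f hf hfK, hy f hf hfK, add_zero]
  smul_mem' c x hx f hf hfK := by rw [map_smul, hx f hf hfK, smul_zero]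

theorem spectralSubspace_mono (T : H →L[ℂ] H) {K L : Set ℂ} (hKL : K ⊆ L) :
    spectralSubspace T K ≤ spectralSubspace T L :=
  fun _ hx f hf hfL ↦ hx f hf (hfL.mono hKL)

theorem cfc_apply_congr_of_eqOn {T : H →L[ℂ] H} {K : Set ℂ} {x : H}
    (hx : x ∈ spectralSubspace T K) {f g : ℂ → ℂ} (hf : Continuous f) (hg : Continuous g)
    (hfg : Set.EqOn f g K) : cfc f T x = cfc g T x := by
  rw [← sub_eq_zero, ← sub_apply, ← cfc_sub f g T hf.continuousOn hg.continuousOn]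
  exact hx _ (hf.sub hg) fun w hw ↦ sub_eq_zero.2 (hfg hw)

section Normal

variable {T : H →L[ℂ] H} [IsStarNormal T] {K L : Set ℂ} {x : H}

theorem apply_mem_spectralSubspace (hx : x ∈ spectralSubspace T K) :
    T x ∈ spectralSubspace T K := fun f hf hfK ↦ by
  have hcomm : Commute (cfc f T) T := (Commute.refl T).cfc (star_comm_self' T) f
  rw [← mul_apply_eq_comp, hcomm.eq, mul_apply_eq_comp, hx f hf hfK, map_zero]

theorem isOrtho_spectralSubspace (hK : IsClosed K) (hL : IsClosed L) (hKL : Disjoint K L) :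
    spectralSubspace T K ⟂ spectralSubspace T L := by
  rw [Submodule.isOrtho_iff_inner_eq]
  intro x hx y hy
  obtain ⟨f, hfK, hfL, -⟩ := exists_continuous_zero_one_of_isClosed hK hL hKL
  set A : H →L[ℂ] H := cfc (fun w ↦ (f w : ℂ)) T
  have hA_self : ContinuousLinearMap.adjoint A = A := by
    rw [← ContinuousLinearMap.star_eq_adjoint, ← cfc_star]
    simp [A]
  have hAx : A x = 0 := hx _ (by fun_prop) fun w hw ↦ by simp [hfK hw]
  have hAy : A y = y := by
    have hf_one : Set.EqOn (fun w ↦ (f w : ℂ)) 1 L := fun w hw ↦ by simp [hfL hw]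
    rw [cfc_apply_congr_of_eqOn hy (by fun_prop) continuous_one hf_one, cfc_one ℂ T,
      one_apply_eq_self]
  rw [← hAy, ← ContinuousLinearMap.adjoint_inner_left, hA_self, hAx, inner_zero_left]

theorem ker_sub_smul_le_spectralSubspace {z : ℂ} (hz : z ∈ K) :
    LinearMap.ker ((T : H →ₗ[ℂ] H) - z • (LinearMap.id : H →ₗ[ℂ] H)) ≤ spectralSubspace T K := by
  intro x hx f hf hfK
  have hTx : T x = z • x := sub_eq_zero.1 hx
  rw [cfc_apply_of_apply_eq_smul hTx hf.continuousOn, hfK hz, Pi.zero_apply, zero_smul]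

theorem spectralSubspace_ne_bot {z : ℂ} (hz : z ∈ spectrum ℂ T) (hzK : z ∈ interior K) :
    spectralSubspace T K ≠ ⊥ := by
  obtain ⟨χ, hχK, hχz, -⟩ := exists_continuous_zero_one_of_isClosed
    isOpen_interior.isClosed_compl isClosed_singleton
    (Set.disjoint_singleton_right.2 (Set.notMem_compl_iff.2 hzK))
  set A : H →L[ℂ] H := cfc (fun w ↦ (χ w : ℂ)) T
  have hA_mem (y : H) : A y ∈ spectralSubspace T K := by
    intro f hf hfK
    have hfχ : (fun w ↦ f w * χ w) = 0 := by
      ext w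
      by_cases hw : w ∈ interior K
      · simp [hfK (interior_subset hw)]
      · simp [hχK hw]
    rw [← mul_apply_eq_comp, ← cfc_mul f _ T, hfχ]
    simp
  have hA_norm : 1 ≤ ‖A‖ := by
    simpa [hχz rfl] using norm_apply_le_norm_cfc (fun w ↦ (χ w : ℂ)) T hz
  intro h_bot
  have hA_zero : A = 0 := ContinuousLinearMap.ext fun y ↦ by simpa [h_bot] using hA_mem y
  norm_num [hA_zero] at hA_norm

theorem inner_apply_mem_of_mem_spectralSubspace (hK : IsClosed K) (hKc : Convex ℝ K)
    (hx : x ∈ spectralSubspace T K) (hx₁ : ‖x‖ = 1) : ⟪x, T x⟫_ℂ ∈ K := by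
  by_contra h_notMem
  obtain ⟨φ, u, hφK, hu⟩ := RCLike.geometric_hahn_banach_closed_point (𝕜 := ℂ) hKc hK h_notMem
  have hφ (w : ℂ) : φ w = φ 1 * w := by simpa [mul_comm] using φ.map_smul w 1
  -- `f` agrees with `u - φ` on `K` but, unlike it, has nonnegative real part on all of `ℂ`.
  let f (w : ℂ) : ℂ := u - φ 1 * w + (max ((φ 1 * w).re - u) 0 : ℝ)
  have hf_re (w : ℂ) : 0 ≤ (f w).re := by
    simp only [f, add_re, sub_re, ofReal_re]
    linarith [le_max_left ((φ 1 * w).re - u) 0]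
  have hfK : Set.EqOn f (fun w ↦ u - φ 1 * w) K := fun w hw ↦ by
    have hw_lt : (φ 1 * w).re < u := hφ w ▸ hφK w hw
    simp only [f, max_eq_right (sub_nonpos.2 hw_lt.le), ofReal_zero, add_zero]
  have hfx : cfc f T x = (u : ℂ) • x - φ 1 • T x := by
    rw [cfc_apply_congr_of_eqOn hx (by fun_prop) (by fun_prop) hfK, cfc_sub _ _ T, cfc_const _ T,
      cfc_const_mul_id _ T]
    simp [Algebra.algebraMap_eq_smul_one]
  have h_nonneg := re_inner_cfc_nonneg (T := T) (f := f) (by fun_prop) (fun w _ ↦ hf_re w) x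
  rw [hfx, inner_sub_right, inner_smul_right, inner_smul_right, inner_self_eq_norm_sq_to_K, hx₁,
    ← hφ] at h_nonneg
  refine hu.not_ge ?_
  simpa using h_nonneg

theorem card_le_rank_spectralSubspace {s : Finset ℂ} (hs : ↑s ⊆ spectrum ℂ T)
    (hsK : ↑s ⊆ interior K) : (s.card : Cardinal) ≤ Module.rank ℂ (spectralSubspace T K) := by
  obtain ⟨V, hV, hV_disj⟩ := s.finite_toSet.t2_separation
  choose L hL hzL hLV using fun z : s ↦
    exists_compact_subset ((hV z).2.inter isOpen_interior) ⟨(hV z).1, hsK z.2⟩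
  choose x hxL hx₀ using fun z : s ↦
    (Submodule.ne_bot_iff _).1 (spectralSubspace_ne_bot (hs z.2) (hzL z))
  have hx_ortho : Pairwise fun z w ↦ ⟪x z, x w⟫_ℂ = 0 := fun z w hzw ↦ by
    have hL_disj : Disjoint (L z) (L w) :=
      (hV_disj z.2 w.2 (Subtype.coe_injective.ne hzw)).mono
        ((hLV z).trans Set.inter_subset_left) ((hLV w).trans Set.inter_subset_left)
    exact Submodule.isOrtho_iff_inner_eq.1
      (isOrtho_spectralSubspace (hL z).isClosed (hL w).isClosed hL_disj) _ (hxL z) _ (hxL w)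
  have hxK (z : s) : x z ∈ spectralSubspace T K :=
    spectralSubspace_mono T ((hLV z).trans (Set.inter_subset_right.trans interior_subset)) (hxL z)
  have h_indep : LinearIndependent ℂ fun z ↦ (⟨x z, hxK z⟩ : spectralSubspace T K) :=
    .of_comp (Submodule.subtype _) (linearIndependent_of_ne_zero_of_inner_eq_zero hx₀ hx_ortho)
  simpa using h_indep.cardinal_lift_le_rank

end Normal

/-- The hypothesis on `U` in both halves of the theorem. For normal `T` and open `U` it forces the
spectral projection of `U` to have infinite rank. -/
def HasInfiniteSpectralPart (T : H →L[ℂ] H) (U : Set ℂ) : Prop :=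
  (U ∩ spectrum ℂ T).Infinite ∨ ∃ z ∈ U ∩ spectrum ℂ T, HasInfMultEigenvalue T z

theorem exists_isClosed_convex_le_rank_spectralSubspace {T : H →L[ℂ] H} [IsStarNormal T] {U : Set ℂ}
    (hU : IsOpen U) (hUc : Convex ℝ U) (hTU : HasInfiniteSpectralPart T U) (k : ℕ) :
    ∃ C ⊆ U, IsClosed C ∧ Convex ℝ C ∧ (k : Cardinal) ≤ Module.rank ℂ (spectralSubspace T C) := by
  rcases hTU with h_inf | ⟨z, ⟨hzU, -⟩, hz⟩
  · obtain ⟨s, hs, rfl⟩ := h_inf.exists_subset_card_eq k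
    obtain ⟨hsU, hsT⟩ := Set.subset_inter_iff.1 hs
    obtain ⟨C, hCU, hC, hCc, hsC⟩ := exists_isClosed_convex_subset_of_finset hU hUc hsU
    exact ⟨C, hCU, hC, hCc, card_le_rank_spectralSubspace hsT hsC⟩
  · refine ⟨{z}, by simpa, isClosed_singleton, convex_singleton z, ?_⟩
    have h_rank := mt Module.rank_lt_aleph0_iff.1 hz
    exact Cardinal.natCast_le_aleph0.trans <| (not_lt.1 h_rank).trans <|
      Submodule.rank_mono (ker_sub_smul_le_spectralSubspace rfl)

theorem exists_submodule_le_finrank_eq {R M : Type*} [Ring R] [StrongRankCondition R]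
    [AddCommGroup M] [Module R M] {N : Submodule R M} {k : ℕ}
    (hk : (k : Cardinal) ≤ Module.rank R N) : ∃ K ≤ N, Module.finrank R K = k := by
  have := nontrivial_of_invariantBasisNumber R
  obtain ⟨v, hv⟩ := exists_linearIndependent_of_le_rank hk
  refine ⟨Submodule.span R (Set.range (N.subtype ∘ v)), ?_, ?_⟩
  · rw [Submodule.span_le]
    rintro _ ⟨i, rfl⟩
    exact (v i).2
  · rw [finrank_span_eq_card (hv.map' N.subtype N.ker_subtype), Fintype.card_fin]

theorem exists_finrank_eq_le_spectralSubspace {T : H →L[ℂ] H} [IsStarNormal T] {U : Set ℂ}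
    (hU : IsOpen U) (hUc : Convex ℝ U) (hTU : HasInfiniteSpectralPart T U) (k : ℕ) :
    ∃ C ⊆ U, IsClosed C ∧ ∃ K ≤ spectralSubspace T C, Module.finrank ℂ K = k ∧
      ∀ x ∈ K, ‖x‖ = 1 → ⟪x, T x⟫_ℂ ∈ U := by
  obtain ⟨C, hCU, hC, hCc, hkC⟩ := exists_isClosed_convex_le_rank_spectralSubspace hU hUc hTU k
  obtain ⟨K, hKC, hK⟩ := exists_submodule_le_finrank_eq hkC
  exact ⟨C, hCU, hC, K, hKC, hK, fun x hx hx₁ ↦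
    hCU (inner_apply_mem_of_mem_spectralSubspace hC hCc (hKC hx) hx₁)⟩

theorem normal_sector_compressions_general {T : H →L[ℂ] H} [IsStarNormal T] {U V : Set ℂ}
    (hU : IsOpen U) (hUc : Convex ℝ U) (hV : IsOpen V) (hVc : Convex ℝ V) (hUV : Disjoint U V)
    (k l : ℕ) :
    (HasInfiniteSpectralPart T U →
      ∃ K : Submodule ℂ H, Module.finrank ℂ K = k ∧ ∀ x ∈ K, ‖x‖ = 1 → ⟪x, T x⟫_ℂ ∈ U) ∧
    (HasInfiniteSpectralPart T V →
      ∃ L : Submodule ℂ H, Module.finrank ℂ L = l ∧ ∀ x ∈ L, ‖x‖ = 1 → ⟪x, T x⟫_ℂ ∈ V) ∧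
    (HasInfiniteSpectralPart T U → HasInfiniteSpectralPart T V →
      ∃ K L : Submodule ℂ H, Module.finrank ℂ K = k ∧ Module.finrank ℂ L = l ∧
        (∀ x ∈ K, ∀ y ∈ L, ⟪x, y⟫_ℂ = 0) ∧
        (∀ x ∈ K, ∀ y ∈ L, ⟪y, T x⟫_ℂ = 0 ∧ ⟪x, T y⟫_ℂ = 0) ∧
        (∀ x ∈ K, ‖x‖ = 1 → ⟪x, T x⟫_ℂ ∈ U) ∧ (∀ x ∈ L, ‖x‖ = 1 → ⟪x, T x⟫_ℂ ∈ V)) := by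
  refine ⟨fun hTU ↦ ?_, fun hTV ↦ ?_, fun hTU hTV ↦ ?_⟩
  · obtain ⟨-, -, -, K, -, hK, hKU⟩ := exists_finrank_eq_le_spectralSubspace hU hUc hTU k
    exact ⟨K, hK, hKU⟩
  · obtain ⟨-, -, -, L, -, hL, hLV⟩ := exists_finrank_eq_le_spectralSubspace hV hVc hTV l
    exact ⟨L, hL, hLV⟩
  · obtain ⟨C, hCU, hC, K, hKC, hK, hKU⟩ := exists_finrank_eq_le_spectralSubspace hU hUc hTU k
    obtain ⟨D, hDV, hD, L, hLD, hL, hLV⟩ := exists_finrank_eq_le_spectralSubspace hV hVc hTV l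
    have h_ortho := isOrtho_spectralSubspace (T := T) hC hD (hUV.mono hCU hDV)
    refine ⟨K, L, hK, hL, fun x hx y hy ↦ ?_, fun x hx y hy ↦ ⟨?_, ?_⟩, hKU, hLV⟩
    · exact h_ortho.inner_eq (hKC hx) (hLD hy)
    · exact h_ortho.symm.inner_eq (hLD hy) (apply_mem_spectralSubspace (hKC hx))
    · exact h_ortho.inner_eq (hKC hx) (apply_mem_spectralSubspace (hLD hy))

/-- Let `T` be a normal operator on an infinite-dimensional Hilbert space with
`σ(T) ⊆ {ρe^{it} : ρ > 0, t ∈ [s₁,s₂]}`, `π ≤ s₁ < s₂ ≤ 2π`, and let `s₃ ∈ (s₁,s₂)`,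
`ℒ = {ρe^{it} : ρ>0, t∈(s₁,s₃)}`, `ℛ = {ρe^{it} : ρ>0, t∈(s₃,s₂)}`.
(a) If `ℒ ∩ σ(T)` is infinite or contains an eigenvalue of infinite multiplicity,
then `T` has a `k`-dimensional compression with numerical range in `ℒ`; (b) likewise
for `ℛ`; and if both hypotheses hold there are orthogonal `k`-dimensional subspaces
`K₁, K₂` on which the compression of `T` is block diagonal `T₁ ⊕ T₂` with
`W(T₁) ⊆ ℒ` and `W(T₂) ⊆ ℛ`. -/
theorem normal_sector_compressions
    (hH : ¬ FiniteDimensional ℂ H)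
    (T : H →L[ℂ] H)
    (hT : ContinuousLinearMap.adjoint T ∘L T = T ∘L ContinuousLinearMap.adjoint T)
    (s₁ s₂ : ℝ) (h₁ : Real.pi ≤ s₁) (h₁₂ : s₁ < s₂) (h₂ : s₂ ≤ 2 * Real.pi)
    (hspec : spectrum ℂ T ⊆ closedSector s₁ s₂)
    (k : ℕ) (hk : 1 ≤ k) (s₃ : ℝ) (hs₃ : s₃ ∈ Set.Ioo s₁ s₂) :
    ((openSector s₁ s₃ ∩ spectrum ℂ T).Infinite ∨
        (∃ z ∈ openSector s₁ s₃ ∩ spectrum ℂ T, HasInfMultEigenvalue T z) →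
      ∃ K : Submodule ℂ H, Module.finrank ℂ K = k ∧
        ∀ x ∈ K, ‖x‖ = 1 → ⟪x, T x⟫_ℂ ∈ openSector s₁ s₃) ∧
    ((openSector s₃ s₂ ∩ spectrum ℂ T).Infinite ∨
        (∃ z ∈ openSector s₃ s₂ ∩ spectrum ℂ T, HasInfMultEigenvalue T z) →
      ∃ K : Submodule ℂ H, Module.finrank ℂ K = k ∧
        ∀ x ∈ K, ‖x‖ = 1 → ⟪x, T x⟫_ℂ ∈ openSector s₃ s₂) ∧
    (((openSector s₁ s₃ ∩ spectrum ℂ T).Infinite ∨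
        (∃ z ∈ openSector s₁ s₃ ∩ spectrum ℂ T, HasInfMultEigenvalue T z)) →
      ((openSector s₃ s₂ ∩ spectrum ℂ T).Infinite ∨
        (∃ z ∈ openSector s₃ s₂ ∩ spectrum ℂ T, HasInfMultEigenvalue T z)) →
      ∃ K₁ K₂ : Submodule ℂ H,
        Module.finrank ℂ K₁ = k ∧ Module.finrank ℂ K₂ = k ∧
        (∀ x ∈ K₁, ∀ y ∈ K₂, ⟪x, y⟫_ℂ = 0) ∧
        (∀ x ∈ K₁, ∀ y ∈ K₂, ⟪y, T x⟫_ℂ = 0 ∧ ⟪x, T y⟫_ℂ = 0) ∧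
        (∀ x ∈ K₁, ‖x‖ = 1 → ⟪x, T x⟫_ℂ ∈ openSector s₁ s₃) ∧
        (∀ x ∈ K₂, ‖x‖ = 1 → ⟪x, T x⟫_ℂ ∈ openSector s₃ s₂)) :=
  have : IsStarNormal T := ⟨hT⟩
  normal_sector_compressions_general (isOpen_openSector s₁ s₃)
    (convex_openSector (by linarith [hs₃.2])) (isOpen_openSector s₃ s₂)
    (convex_openSector (by linarith [hs₃.1])) (disjoint_openSector le_rfl (by linarith)) k k
end
end
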